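/- arXiv:0803.1860 — 3 statements merged into one kernel-verified Lean document; each statement's English description precedes it below -/
import Mathlib

section
/- Let r,s ≥ 1. If every nonempty subgraph of a graph G has a vertex of degree at most one, or a vertex of degree at most s all of whose neighbors have degree at most r (degrees taken within that subgraph), then G is (s, r+1)-degenerate. -/
/-- A graph `G` is `(d,Δ)`-degenerate if there is an ordering `v_1,…,v_n` of its vertices such
that each `v_i` has at most `d` neighbors `v_j` with `j < i`, and there are at most `Δ` distinct
sets `S ⊆ {v_1,…,v_i}` of the form `S = N(v_j) ∩ {v_1,…,v_i}` for some neighbor `v_j` of `v_i`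
with `j > i`. -/
def DDeltaDegenerate {V : Type*} [Fintype V] (G : SimpleGraph V) (d Δ : ℕ) : Prop :=
  ∃ f : Fin (Fintype.card V) ≃ V, ∀ i : Fin (Fintype.card V),
    {j : Fin (Fintype.card V) | j < i ∧ G.Adj (f j) (f i)}.ncard ≤ d ∧
    {S : Set V | ∃ j : Fin (Fintype.card V), i < j ∧ G.Adj (f j) (f i) ∧
        S = {v : V | G.Adj (f j) v ∧ f.symm v ≤ i}}.ncard ≤ Δ

/-! Repeatedly remove a vertex provided by the hypothesis and order the vertices in reverse order of
removal. A later neighbor `w` of `v` that was removed with degree at most one sees only `v` among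
the vertices up to `v`, so all such `w` contribute the single trace `{v}`. Any other later neighbor
`w` was removed when `v` had degree at most `r`; the last such `w` was removed first, while all of
them were still neighbors of `v`, so there are at most `r` of them. -/

open Set

lemma exists_injective_fin_forall_image_Iic {α : Type*} [Finite α] {P : Set α → α → Prop}
    (hP : ∀ t : Set α, t.Nonempty → ∃ v ∈ t, P t v) {n : ℕ} {t : Set α} (ht : t.ncard = n) :
    ∃ f : Fin n → α, Function.Injective f ∧ range f = t ∧ ∀ i, P (f '' Iic i) (f i) := by
  induction n generalizing t with
  | zero =>
    have ht_empty : t = ∅ := (ncard_eq_zero t.toFinite).1 ht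
    exact ⟨Fin.elim0, Function.injective_of_subsingleton _, by simp [ht_empty], fun i => i.elim0⟩
  | succ n ih =>
    obtain ⟨v, hvt, hv⟩ := hP t (nonempty_of_ncard_ne_zero (by omega))
    have hcard : (t \ {v}).ncard = n := by
      rw [ncard_sdiff_singleton_of_mem hvt, ht, Nat.add_sub_cancel]
    obtain ⟨f, hf, hrange, hPf⟩ := ih hcard
    have hv_range : v ∉ range f := by simp [hrange]
    have hrange_snoc : range (Fin.snoc f v : Fin (n + 1) → α) = t := by
      rw [Fin.range_snoc, hrange, insert_sdiff_singleton, insert_eq_of_mem hvt]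
    refine ⟨Fin.snoc f v, Fin.snoc_injective_of_injective hf hv_range, hrange_snoc, ?_⟩
    intro i
    cases i using Fin.lastCases with
    | last =>
      rw [← Fin.top_eq_last, Iic_top, image_univ, hrange_snoc, Fin.top_eq_last, Fin.snoc_last]
      exact hv
    | cast i =>
      simpa only [← Fin.image_castSucc_Iic, image_image, Fin.snoc_castSucc] using hPf i

lemma exists_linearOrder_forall_Iic {α : Type*} [Finite α] {P : Set α → α → Prop}
    (hP : ∀ t : Set α, t.Nonempty → ∃ v ∈ t, P t v) :
    ∃ _ : LinearOrder α, ∀ v, P (Iic v) v := by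
  obtain ⟨f, hf, hrange, hPf⟩ := exists_injective_fin_forall_image_Iic hP (ncard_univ α)
  let e := Equiv.ofBijective f ⟨hf, range_eq_univ.1 hrange⟩
  refine ⟨LinearOrder.lift' e.symm e.symm.injective, fun v => ?_⟩
  have himage : e '' Iic (e.symm v) = {u | e.symm u ≤ e.symm v} := e.image_eq_preimage_symm _
  have hPv : P (e '' Iic (e.symm v)) (e (e.symm v)) := hPf (e.symm v)
  rwa [himage, e.apply_symm_apply] at hPv

lemma ncard_le_of_forall_ncard_inter_Iic_le {α : Type*} [LinearOrder α] {C : Set α} {r : ℕ}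
    (hC : C.Finite) (h : ∀ w ∈ C, (C ∩ Iic w).ncard ≤ r) : C.ncard ≤ r := by
  obtain rfl | hne := C.eq_empty_or_nonempty
  · simp
  · obtain ⟨m, hm, hmax⟩ := exists_max_image C id hC hne
    rw [← inter_eq_left.2 hmax]
    exact h m hm

lemma neighborSet_inter_Iic_eq_singleton {V : Type*} [Preorder V] {G : SimpleGraph V} {v w : V}
    (hadj : G.Adj w v) (hvw : v ≤ w) (hw : (G.neighborSet w ∩ Iic w).Subsingleton) :
    G.neighborSet w ∩ Iic v = {v} :=
  (hw.anti (inter_subset_inter_right _ (Iic_subset_Iic.2 hvw))).eq_singleton_of_mem ⟨hadj, le_rfl⟩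

section LinearOrder

variable {V : Type*} [LinearOrder V] {G : SimpleGraph V}

lemma dDeltaDegenerate_of_linearOrder [Fintype V] {d Δ : ℕ}
    (hd : ∀ v, (G.neighborSet v ∩ Iio v).ncard ≤ d)
    (hΔ : ∀ v, ((fun w => G.neighborSet w ∩ Iic v) '' (G.neighborSet v ∩ Ioi v)).ncard ≤ Δ) :
    DDeltaDegenerate G d Δ := by
  let f := Fintype.orderIsoFinOfCardEq V rfl
  refine ⟨f.toEquiv, fun i => ⟨?_, ?_⟩⟩
  · refine le_trans (ncard_le_ncard_of_injOn f ?_ f.injective.injOn) (hd (f i))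
    rintro j ⟨hji, hadj⟩
    exact ⟨hadj.symm, f.lt_iff_lt.2 hji⟩
  · refine le_trans (ncard_le_ncard ?_) (hΔ (f i))
    rintro S ⟨j, hij, hadj, rfl⟩
    refine ⟨f j, ⟨hadj.symm, f.lt_iff_lt.2 hij⟩, ?_⟩
    ext v
    exact and_congr_right fun _ => (f.symm_apply_le).symm

lemma ncard_image_neighborSet_inter_Iic_le [Finite V] {r : ℕ}
    (h : ∀ w, (G.neighborSet w ∩ Iic w).ncard ≤ 1 ∨
      ∀ u ∈ G.neighborSet w ∩ Iic w, (G.neighborSet u ∩ Iic w).ncard ≤ r) (v : V) :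
    ((fun w => G.neighborSet w ∩ Iic v) '' (G.neighborSet v ∩ Ioi v)).ncard ≤ r + 1 := by
  let C : Set V := {w ∈ G.neighborSet v ∩ Ioi v | (G.neighborSet v ∩ Iic w).ncard ≤ r}
  have hC : C.ncard ≤ r := ncard_le_of_forall_ncard_inter_Iic_le C.toFinite fun w hw =>
    (ncard_le_ncard (inter_subset_inter_left _ fun _ hu => hu.1.1)).trans hw.2
  have hsub : (fun w => G.neighborSet w ∩ Iic v) '' (G.neighborSet v ∩ Ioi v) ⊆
      insert {v} ((fun w => G.neighborSet w ∩ Iic v) '' C) := by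
    rintro _ ⟨w, ⟨hadj, hvw⟩, rfl⟩
    rcases h w with hone | hr
    · exact .inl <| neighborSet_inter_Iic_eq_singleton hadj.symm hvw.le
        (ncard_le_one_iff_subsingleton.1 hone)
    · exact .inr <| mem_image_of_mem _ ⟨⟨hadj, hvw⟩, hr v ⟨hadj.symm, hvw.le⟩⟩
  calc
    _ ≤ (insert {v} ((fun w => G.neighborSet w ∩ Iic v) '' C)).ncard := ncard_le_ncard hsub
    _ ≤ ((fun w => G.neighborSet w ∩ Iic v) '' C).ncard + 1 := ncard_insert_le _ _
    _ ≤ r + 1 := by grw [ncard_image_le, hC]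

end LinearOrder

/-- The vertex `v` can be removed from the subgraph of `G` induced on `t`: degrees being taken in
that subgraph, `v` has degree at most `s`, and either `v` has degree at most one or all its
neighbors have degree at most `r`. The bound `s` is imposed in both cases. -/
def IsPeelable {V : Type*} (G : SimpleGraph V) (s r : ℕ) (t : Set V) (v : V) : Prop :=
  (G.neighborSet v ∩ t).ncard ≤ s ∧
    ((G.neighborSet v ∩ t).ncard ≤ 1 ∨
      ∀ u ∈ G.neighborSet v ∩ t, (G.neighborSet u ∩ t).ncard ≤ r)

/-- Let `r, s ≥ 1`. If every nonempty subgraph of `G` has a vertex of degree at most one, or a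
vertex of degree at most `s` all of whose neighbors have degree at most `r` (degrees within that
subgraph), then `G` is `(s, r+1)`-degenerate. -/
theorem stmt_4 {V : Type*} [Fintype V] (G : SimpleGraph V) (r s : ℕ) (hr : 1 ≤ r) (hs : 1 ≤ s)
    (h : ∀ t : Finset V, t.Nonempty →
      (∃ v ∈ t, {u : V | u ∈ t ∧ G.Adj v u}.ncard ≤ 1) ∨
      (∃ v ∈ t, {u : V | u ∈ t ∧ G.Adj v u}.ncard ≤ s ∧
        ∀ u ∈ t, G.Adj v u → {w : V | w ∈ t ∧ G.Adj u w}.ncard ≤ r)) :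
    DDeltaDegenerate G s (r + 1) := by
  have hpeel : ∀ t : Set V, t.Nonempty → ∃ v ∈ t, IsPeelable G s r t v := by
    intro t ht
    lift t to Finset V using t.toFinite
    have hinter (v : V) : G.neighborSet v ∩ t = {u | u ∈ t ∧ G.Adj v u} := inter_comm _ _
    simp only [IsPeelable, hinter]
    rcases h t ht with ⟨v, hvt, hone⟩ | ⟨v, hvt, hv, hnbr⟩
    · exact ⟨v, hvt, hone.trans hs, .inl hone⟩
    · exact ⟨v, hvt, hv, .inr fun u hu => hnbr u hu.1 hu.2⟩
  obtain ⟨_, hlast⟩ := exists_linearOrder_forall_Iic hpeel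
  have hback (v : V) : (G.neighborSet v ∩ Iio v).ncard ≤ s :=
    (ncard_le_ncard (inter_subset_inter_right _ Iio_subset_Iic_self)).trans (hlast v).1
  exact dDeltaDegenerate_of_linearOrder hback
    (ncard_image_neighborSet_inter_Iic_le fun v => (hlast v).2)
end

section
/- For every positive integer d there is a constant c_d such that every d-degenerate graph H on n ≥ 2 vertices satisfies r(H) ≤ 2^{c_d √(log n)} · n, where r(H) is the two-color Ramsey number of H. -/
/-- A graph is `d`-degenerate if every nonempty (induced) subgraph has a vertex of degree
at most `d`. -/
def DDegenerate {V : Type*} (G : SimpleGraph V) (d : ℕ) : Prop :=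
  ∀ s : Finset V, s.Nonempty → ∃ v ∈ s, {u : V | u ∈ s ∧ G.Adj v u}.ncard ≤ d


/-- `HasRamsey H N` means every two-coloring of the edges of `K_N` (given by a graph `C` on
`Fin N` of red edges, the blue edges being its complement) contains a monochromatic copy of
`H`. -/
def HasRamsey {W : Type*} (H : SimpleGraph W) (N : ℕ) : Prop :=
  ∀ C : SimpleGraph (Fin N),
    (∃ f : W ↪ Fin N, ∀ a b : W, H.Adj a b → C.Adj (f a) (f b)) ∨
    (∃ f : W ↪ Fin N, ∀ a b : W, H.Adj a b → Cᶜ.Adj (f a) (f b))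

/-- The two-color Ramsey number of `H`: the least `N` such that every two-coloring of the edges
of `K_N` contains a monochromatic copy of `H`. -/
noncomputable def ramseyNumber {W : Type*} (H : SimpleGraph W) : ℕ :=
  sInf {N : ℕ | HasRamsey H N}

/-!
Fix a `κ`-coloring of the pairs of vertices of `V`, let `N = card V`, and consider sequences of
`m = card κ * d + 1` blocks of `q` vertices each. Iterating the averaging step of dependent random
choice shows that a proportion `2 ^ (-O(q ^ 2))` of them is forward colored: all pairs from a block
to later blocks receive the color of the earlier block.

A sequence is bad if at most `d` vertices, joined in one color to a block, have together with the
other blocks of that color fewer than `n` common neighbors in that color. Once these vertices and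
the other blocks are fixed, the `q` entries of the block lie in a set of fewer than `n` vertices, so
the proportion of bad sequences is `O(N ^ d * (n / N) ^ q)`. For `N = n * 2 ^ (K * q)` with `q` of
order `√(log n)` and `K` large this is smaller than the proportion of forward colored sequences.

Hence some forward colored sequence is not bad, and `d + 1` of its blocks have the same color. Fix a
proper `(d + 1)`-coloring of `H` by these blocks. The vertices of `H` can then be embedded greedily,
each being joined to the images of its earlier neighbors and to all blocks except its own.
-/

section

open Finset Fintype

variable {V κ ι W : Type*}

lemma card_mul_pow_le_sum_pow {R : Type*} [CommSemiring R] [LinearOrder R] [IsStrictOrderedRing R]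
    [ExistsAddOfLE R] {s : Finset ι} {f : ι → R} (hf : ∀ i ∈ s, 0 ≤ f i) {c : R} (hc : 0 ≤ c)
    (h : #s * c ≤ ∑ i ∈ s, f i) (n : ℕ) : #s * c ^ n ≤ ∑ i ∈ s, f i ^ n := by
  rcases s.eq_empty_or_nonempty with rfl | hs
  · simp
  cases n with
  | zero => simp
  | succ n =>
    have hpos : (0 : R) < #s ^ n := pow_pos (mod_cast hs.card_pos) n
    refine le_of_mul_le_mul_left ?_ hpos
    calc (#s : R) ^ n * (#s * c ^ (n + 1)) = (#s * c) ^ (n + 1) := by ring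
      _ ≤ (∑ i ∈ s, f i) ^ (n + 1) := by gcongr
      _ ≤ #s ^ n * ∑ i ∈ s, f i ^ (n + 1) := pow_sum_le_card_mul_sum_pow hf n

lemma exists_color_card_mul_le_sum_card [Fintype κ] [Nonempty κ] [DecidableEq κ]
    (C : V → V → κ) (U : Finset V) :
    ∃ k, (#U : ℝ) * (#U / card κ) ≤ ∑ x ∈ U, (#{y ∈ U | C y x = k} : ℝ) := by
  obtain ⟨k, -, hk⟩ := exists_le_card_fiber_of_nsmul_le_card_of_maps_to
    (s := U ×ˢ U) (t := univ) (f := fun p => C p.2 p.1) (b := (#U : ℝ) * (#U / card κ))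
    (by simp) univ_nonempty (by
      rw [card_univ, card_product, nsmul_eq_mul, Nat.cast_mul]
      have : (card κ : ℝ) ≠ 0 := by simp
      exact le_of_eq (by field_simp))
  refine ⟨k, hk.trans_eq ?_⟩
  simp_rw [card_filter, sum_product]
  push_cast
  rfl

lemma sum_card_filter_forall_eq_sum_card_filter_pow {α β : Type*} [Fintype ι] [DecidableEq ι]
    (r : α → β → Prop) [∀ a b, Decidable (r a b)] (s : Finset α) (t : Finset β) :
    ∑ v ∈ piFinset fun _ : ι => s, #{y ∈ t | ∀ i, r (v i) y} =
      ∑ y ∈ t, #{x ∈ s | r x y} ^ card ι := by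
  refine (sum_card_bipartiteAbove_eq_sum_card_bipartiteBelow
    fun (v : ι → α) y => ∀ i, r (v i) y).trans (sum_congr rfl fun y _ => ?_)
  have hfiber : ({v ∈ piFinset fun _ : ι => s | ∀ i, r (v i) y} : Finset (ι → α)) =
      piFinset fun _ => {x ∈ s | r x y} := by
    ext v
    simp [mem_piFinset, forall_and]
  simp [bipartiteBelow, hfiber]

lemma exists_color_card_pow_mul_le_sum_card [Fintype κ] [Nonempty κ] [DecidableEq κ] [Fintype ι]
    [DecidableEq ι] (C : V → V → κ) (U : Finset V) :
    ∃ k, (#U : ℝ) ^ card ι * (#U / card κ ^ card ι) ≤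
      ∑ t ∈ piFinset fun _ : ι => U, (#{x ∈ U | ∀ a, C (t a) x = k} : ℝ) := by
  obtain ⟨k, hk⟩ := exists_color_card_mul_le_sum_card C U
  refine ⟨k, ?_⟩
  calc (#U : ℝ) ^ card ι * (#U / card κ ^ card ι) = #U * (#U / card κ) ^ card ι := by
        rw [div_pow]; ring
    _ ≤ ∑ x ∈ U, (#{y ∈ U | C y x = k} : ℝ) ^ card ι :=
        card_mul_pow_le_sum_pow (fun _ _ => by positivity) (by positivity) hk _
    _ = _ := mod_cast (sum_card_filter_forall_eq_sum_card_filter_pow (C · · = k) U U).symm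

/-- The sequence of blocks `T 0, …, T (m - 1)`, each a family of vertices indexed by `ι` with
repetitions allowed, has the property that all pairs from block `T i` to later blocks receive
the color `c i`. -/
def ForwardColored {m : ℕ} (C : V → V → κ) (c : Fin m → κ) (T : Fin m → ι → V) : Prop :=
  ∀ i j, i < j → ∀ a b, C (T i a) (T j b) = c i

lemma ForwardColored.cons {m : ℕ} {C : V → V → κ} {c : Fin m → κ} {T : Fin m → ι → V}
    (hT : ForwardColored C c T) {k : κ} {t : ι → V} (ht : ∀ j a b, C (t a) (T j b) = k) :
    ForwardColored C (Fin.cons k c : Fin (m + 1) → κ) (Fin.cons t T : Fin (m + 1) → ι → V) := by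
  intro i j hij
  induction j using Fin.cases with
  | zero => simp at hij
  | succ j =>
    induction i using Fin.cases with
    | zero => simpa using ht j
    | succ i => simpa using hT i j (by simpa using hij)

lemma ForwardColored.eq_of_ne {m : ℕ} {C : V → V → κ} {c : Fin m → κ} {T : Fin m → ι → V}
    (hT : ForwardColored C c T) (hC : ∀ x y, C x y = C y x) {i j : Fin m} (hij : i ≠ j)
    (hc : c i = c j) (a b : ι) : C (T i a) (T j b) = c j := by
  rcases lt_or_gt_of_ne hij with h | h
  · exact (hT i j h a b).trans hc
  · exact (hC _ _).trans (hT j i h b a)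

open Classical in
/-- The sequences of `m` blocks inside `U` that are forward colored for some choice of colors. -/
noncomputable def forwardColoredFinset [Fintype V] [Fintype ι] (C : V → V → κ) (m : ℕ)
    (U : Finset V) : Finset (Fin m → ι → V) :=
  {T | (∀ i a, T i a ∈ U) ∧ ∃ c, ForwardColored C c T}

@[simp]
lemma mem_forwardColoredFinset [Fintype V] [Fintype ι] {C : V → V → κ} {m : ℕ} {U : Finset V}
    {T : Fin m → ι → V} :
    T ∈ forwardColoredFinset C m U ↔ (∀ i a, T i a ∈ U) ∧ ∃ c, ForwardColored C c T := by
  simp [forwardColoredFinset]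

lemma sum_card_forwardColoredFinset_le [Fintype V] [Fintype ι] [DecidableEq ι] [DecidableEq κ]
    (C : V → V → κ) (m : ℕ) (U : Finset V) (k : κ) :
    ∑ t ∈ piFinset fun _ : ι => U,
        #(forwardColoredFinset (ι := ι) C m {x ∈ U | ∀ a, C (t a) x = k}) ≤
      #(forwardColoredFinset (ι := ι) C (m + 1) U) := by
  rw [← card_sigma]
  refine card_le_card_of_injOn (fun p => (Fin.cons p.1 p.2 : Fin (m + 1) → ι → V)) ?_ ?_
  · rintro ⟨t, T⟩ h
    simp only [coe_sigma, Set.mem_sigma_iff, mem_coe, mem_piFinset, mem_forwardColoredFinset,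
      mem_filter] at h ⊢
    obtain ⟨ht, hT, c, hc⟩ := h
    exact ⟨Fin.cases (by simpa using ht) fun i a => by simpa using (hT i a).1, Fin.cons k c,
      hc.cons fun j a b => (hT j b).2 a⟩
  · rintro ⟨t, T⟩ - ⟨t', T'⟩ - h
    obtain ⟨rfl, rfl⟩ := Fin.cons_injective2 h
    rfl

-- A uniformly random `C` attains this up to the number of choices for `c`: given `c`, the colors of
-- all `m.choose 2 * card ι ^ 2` pairs between distinct blocks are prescribed.
lemma card_pow_div_le_card_forwardColoredFinset [Fintype V] [Fintype κ] [Nonempty κ] [Fintype ι]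
    (C : V → V → κ) (m : ℕ) (U : Finset V) :
    (#U : ℝ) ^ (card ι * m) / card κ ^ (card ι ^ 2 * m.choose 2) ≤
      #(forwardColoredFinset (ι := ι) C m U) := by
  classical
  induction m generalizing U with
  | zero =>
    have hempty : (Fin.elim0 : Fin 0 → ι → V) ∈ forwardColoredFinset C 0 U := by
      simp [ForwardColored]
    simpa using card_pos.2 ⟨_, hempty⟩
  | succ m ih =>
    set q := card ι
    obtain ⟨k, hk⟩ := exists_color_card_pow_mul_le_sum_card (ι := ι) C U
    let N (t : ι → V) : Finset V := {x ∈ U | ∀ a, C (t a) x = k}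
    have hpow : ((#U : ℝ) ^ q) * (#U / card κ ^ q) ^ (q * m) ≤
        ∑ t ∈ piFinset fun _ : ι => U, (#(N t) : ℝ) ^ (q * m) := by
      have hcard : (#(piFinset fun _ : ι => U) : ℝ) = #U ^ q := by simp [q]
      rw [← hcard] at hk ⊢
      exact card_mul_pow_le_sum_pow (fun _ _ => by positivity) (by positivity) hk _
    have hchoose : (m + 1).choose 2 = m + m.choose 2 := by
      rw [Nat.choose_succ_succ' m 1, Nat.choose_one_right]
    calc (#U : ℝ) ^ (q * (m + 1)) / card κ ^ (q ^ 2 * (m + 1).choose 2)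
        = #U ^ q * (#U / card κ ^ q) ^ (q * m) / card κ ^ (q ^ 2 * m.choose 2) := by
          rw [hchoose, div_pow, ← pow_mul]; field_simp; ring
      _ ≤ (∑ t ∈ piFinset fun _ : ι => U, (#(N t) : ℝ) ^ (q * m)) /
            card κ ^ (q ^ 2 * m.choose 2) := by gcongr
      _ = ∑ t ∈ piFinset fun _ : ι => U,
            (#(N t) : ℝ) ^ (q * m) / card κ ^ (q ^ 2 * m.choose 2) := sum_div _ _ _
      _ ≤ ∑ t ∈ piFinset fun _ : ι => U, (#(forwardColoredFinset (ι := ι) C m (N t)) : ℝ) :=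
          sum_le_sum fun t _ => ih (N t)
      _ ≤ #(forwardColoredFinset (ι := ι) C (m + 1) U) :=
          mod_cast sum_card_forwardColoredFinset_le C m U k

lemma card_filter_card_le_le_pow [Fintype V] (d : ℕ) :
    #{S : Finset V | #S ≤ d} ≤ (card V + 1) ^ d := by
  classical
  have hsub : ({S : Finset V | #S ≤ d} : Finset (Finset V)) ⊆
      univ.image fun g : Fin d → Option V => eraseNone (univ.image g) := by
    intro S hS
    simp only [mem_filter, mem_univ, true_and] at hS
    refine mem_image.2 ⟨fun b => S.toList[b.val]?, mem_univ _, ?_⟩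
    ext x
    simp only [mem_eraseNone, mem_image, mem_univ, true_and]
    rw [← mem_toList, List.mem_iff_getElem?]
    refine ⟨fun ⟨b, hb⟩ => ⟨b, hb⟩, fun ⟨i, hi⟩ => ?_⟩
    have hlt : i < #S := by simpa using (List.getElem?_eq_some_iff.1 hi).1
    exact ⟨⟨i, hlt.trans_le hS⟩, hi⟩
  calc #{S : Finset V | #S ≤ d} ≤ card (Fin d → Option V) :=
        (card_le_card hsub).trans (card_image_le.trans_eq card_univ)
    _ = (card V + 1) ^ d := by simp

open Classical in
-- Choose `a` and the blocks other than `T j` freely; then fewer than `n` choices remain for each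
-- entry of `T j`.
lemma card_filter_exists_small_le {α : Type*} [Fintype V] [Fintype ι] (A : Finset α) {m : ℕ}
    (X : α → (Fin m → ι → V) → Finset V) (j : Fin (m + 1)) (n : ℕ) :
    #{T : Fin (m + 1) → ι → V | ∃ a ∈ A,
      (∀ b, T j b ∈ X a (j.removeNth T)) ∧ #(X a (j.removeNth T)) < n} ≤
      #A * card V ^ (card ι * m) * n ^ card ι := by
  let small : Finset (α × (Fin m → ι → V)) := {p ∈ A ×ˢ univ | #(X p.1 p.2) < n}
  let fiber (p : α × (Fin m → ι → V)) : Finset (Fin (m + 1) → ι → V) :=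
    (piFinset fun _ : ι => X p.1 p.2).image fun t => j.insertNth t p.2
  have hfiber : ∀ p ∈ small, #(fiber p) ≤ n ^ card ι := by
    intro p hp
    calc #(fiber p) ≤ #(piFinset fun _ : ι => X p.1 p.2) := card_image_le
      _ = #(X p.1 p.2) ^ card ι := by simp
      _ ≤ n ^ card ι := Nat.pow_le_pow_left (mem_filter.1 hp).2.le _
  have hsmall : #small ≤ #A * card V ^ (card ι * m) := by
    refine (card_filter_le _ _).trans_eq ?_
    simp [pow_mul]
  calc _ ≤ #(small.biUnion fiber) := by
        refine card_le_card fun T hT => ?_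
        obtain ⟨a, ha, hmem, hlt⟩ := (mem_filter.1 hT).2
        exact mem_biUnion.2 ⟨(a, j.removeNth T), mem_filter.2 ⟨by simp [ha], hlt⟩,
          mem_image.2 ⟨T j, mem_piFinset.2 hmem, Fin.insertNth_self_removeNth j T⟩⟩
    _ ≤ #small * n ^ card ι := card_biUnion_le_card_mul _ _ _ hfiber
    _ ≤ #A * card V ^ (card ι * m) * n ^ card ι := by gcongr

open Classical in
/-- The vertices joined in color `c j` to all of `S` and to all blocks of color `c j` other than
block `j`. The family `r` lists the blocks other than block `j`. -/
noncomputable def commonNeighbors [Fintype V] {m : ℕ} (C : V → V → κ) (c : Fin (m + 1) → κ)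
    (j : Fin (m + 1)) (S : Finset V) (r : Fin m → ι → V) : Finset V :=
  {x | (∀ s ∈ S, C x s = c j) ∧ ∀ i, c (j.succAbove i) = c j → ∀ b, C x (r i b) = c j}

lemma mem_commonNeighbors_removeNth [Fintype V] {m : ℕ} {C : V → V → κ} {c : Fin (m + 1) → κ}
    {j : Fin (m + 1)} {S : Finset V} {T : Fin (m + 1) → ι → V} {x : V} :
    x ∈ commonNeighbors C c j S (j.removeNth T) ↔
      (∀ s ∈ S, C x s = c j) ∧ ∀ i ≠ j, c i = c j → ∀ b, C x (T i b) = c j := by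
  simp only [commonNeighbors, mem_filter_univ, Fin.forall_iff_succAbove (p := j)]
  simp [Fin.removeNth_apply, Fin.succAbove_ne]

/-- Whenever `S` is a set of at most `d` vertices such that all entries of block `T j` are joined
in color `c j` to `S` and to the other blocks of that color, at least `n` vertices are joined to
them in this way. -/
def Extendable [Fintype V] {m : ℕ} (C : V → V → κ) (d n : ℕ) (c : Fin (m + 1) → κ)
    (T : Fin (m + 1) → ι → V) (j : Fin (m + 1)) : Prop :=
  ∀ S : Finset V, #S ≤ d → (∀ b, T j b ∈ commonNeighbors C c j S (j.removeNth T)) →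
    n ≤ #(commonNeighbors C c j S (j.removeNth T))

open Classical in
lemma card_filter_not_extendable_le [Fintype V] [Fintype κ] [Fintype ι] (C : V → V → κ)
    (m d n : ℕ) :
    #{T : Fin (m + 1) → ι → V | ∃ c j, ¬ Extendable C d n c T j} ≤
      card κ ^ (m + 1) * (m + 1) *
        ((card V + 1) ^ d * card V ^ (card ι * m) * n ^ card ι) := by
  let bad (p : (Fin (m + 1) → κ) × Fin (m + 1)) : Finset (Fin (m + 1) → ι → V) :=
    {T | ¬ Extendable C d n p.1 T p.2}
  have hbad (p) : #(bad p) ≤ (card V + 1) ^ d * card V ^ (card ι * m) * n ^ card ι := by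
    calc #(bad p) ≤ #{S : Finset V | #S ≤ d} * card V ^ (card ι * m) * n ^ card ι := by
          simpa [bad, Extendable] using
            card_filter_exists_small_le (ι := ι) ({S | #S ≤ d} : Finset (Finset V))
              (commonNeighbors C p.1 p.2) p.2 n
      _ ≤ _ := by gcongr; exact card_filter_card_le_le_pow d
  calc _ ≤ #(univ.biUnion bad) := by
        refine card_le_card fun T hT => ?_
        simpa [bad] using hT
    _ ≤ #(univ : Finset ((Fin (m + 1) → κ) × Fin (m + 1))) * _ :=
        card_biUnion_le_card_mul _ _ _ fun p _ => hbad p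
    _ = _ := by simp

lemma exists_forwardColored_extendable [Fintype V] [Nonempty V] [Fintype κ] [Fintype ι]
    (C : V → V → κ) (m d n : ℕ)
    (hV : card κ ^ (m + 1) * (m + 1) * card κ ^ (card ι ^ 2 * (m + 1).choose 2) *
      (card V + 1) ^ d * n ^ card ι < card V ^ card ι) :
    ∃ (T : Fin (m + 1) → ι → V) (c : Fin (m + 1) → κ), ForwardColored C c T ∧
      ∀ j, Extendable C d n c T j := by
  classical
  have : Nonempty κ := ⟨C (Classical.arbitrary V) (Classical.arbitrary V)⟩
  by_contra! hcon
  have hgood : card V ^ (card ι * (m + 1)) ≤ card κ ^ (card ι ^ 2 * (m + 1).choose 2) *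
      #(forwardColoredFinset (ι := ι) C (m + 1) univ) := by
    have h := card_pow_div_le_card_forwardColoredFinset (ι := ι) C (m + 1) univ
    rw [div_le_iff₀' (by positivity), card_univ] at h
    exact_mod_cast h
  have hsub : forwardColoredFinset (ι := ι) C (m + 1) univ ⊆
      ({T | ∃ c j, ¬ Extendable C d n c T j} : Finset (Fin (m + 1) → ι → V)) := by
    intro T hT
    obtain ⟨-, c, hc⟩ := mem_forwardColoredFinset.1 hT
    exact mem_filter.2 ⟨mem_univ _, c, hcon T c hc⟩
  have hle : card V ^ card ι * card V ^ (card ι * m) ≤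
      card κ ^ (m + 1) * (m + 1) * card κ ^ (card ι ^ 2 * (m + 1).choose 2) *
        (card V + 1) ^ d * n ^ card ι * card V ^ (card ι * m) := by
    calc card V ^ card ι * card V ^ (card ι * m) = card V ^ (card ι * (m + 1)) := by ring
      _ ≤ _ := hgood.trans <| Nat.mul_le_mul_left _ <|
          (card_le_card hsub).trans (card_filter_not_extendable_le C m d n)
      _ = _ := by ring
  exact hV.not_ge (Nat.le_of_mul_le_mul_right hle (by positivity))

-- Since `2 * d < q`, the factor `2 ^ (4 * (d + 2) ^ 2 * q * d)` on the left uses up at most half of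
-- the exponent on the right. The other half absorbs all remaining factors.
lemma two_pow_mul_add_one_pow_lt_two_pow {d q n : ℕ} (hq : 2 * d < q) (hn : n ≤ 2 ^ q ^ 2) :
    2 ^ (2 * d + 1) * (2 * d + 1) * 2 ^ (q ^ 2 * (2 * d + 1).choose 2) *
      (n * 2 ^ (4 * (d + 2) ^ 2 * q) + 1) ^ d < 2 ^ (4 * (d + 2) ^ 2 * q ^ 2) := by
  set K := 4 * (d + 2) ^ 2 with hK
  have hchoose : (2 * d + 1).choose 2 = (2 * d + 1) * d := by
    rw [Nat.choose_two_right]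
    exact Nat.div_eq_of_eq_mul_left two_pos (by simp; ring)
  have hbase : n * 2 ^ (K * q) + 1 ≤ 2 ^ (q ^ 2 + K * q + 1) := by
    calc n * 2 ^ (K * q) + 1 ≤ 2 ^ q ^ 2 * 2 ^ (K * q) + 2 ^ q ^ 2 * 2 ^ (K * q) := by
          gcongr
          exact Nat.one_le_iff_ne_zero.2 (by positivity)
      _ = 2 ^ (q ^ 2 + K * q + 1) := by ring
  have hexp : (2 * d + 1) + (2 * d + 1) + q ^ 2 * ((2 * d + 1) * d) + (q ^ 2 + K * q + 1) * d ≤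
      K * q ^ 2 := by
    have hKd : K * q * (2 * d) ≤ K * q * q := Nat.mul_le_mul_left _ hq.le
    have hq1 : 1 ≤ q ^ 2 := Nat.one_le_pow _ _ (by lia)
    nlinarith [Nat.mul_le_mul_left (5 * d + 2) hq1]
  calc 2 ^ (2 * d + 1) * (2 * d + 1) * 2 ^ (q ^ 2 * (2 * d + 1).choose 2) *
        (n * 2 ^ (K * q) + 1) ^ d
      ≤ 2 ^ (2 * d + 1) * (2 * d + 1) * 2 ^ (q ^ 2 * ((2 * d + 1) * d)) *
        (2 ^ (q ^ 2 + K * q + 1)) ^ d := by rw [hchoose]; gcongr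
    _ < 2 ^ (2 * d + 1) * 2 ^ (2 * d + 1) * 2 ^ (q ^ 2 * ((2 * d + 1) * d)) *
        (2 ^ (q ^ 2 + K * q + 1)) ^ d := by
        gcongr
        exact Nat.lt_two_pow_self
    _ = 2 ^ ((2 * d + 1) + (2 * d + 1) + q ^ 2 * ((2 * d + 1) * d) +
        (q ^ 2 + K * q + 1) * d) := by rw [← pow_mul, ← pow_add, ← pow_add, ← pow_add]
    _ ≤ 2 ^ (K * q ^ 2) := Nat.pow_le_pow_right two_pos hexp

lemma le_two_pow_sq_of_sqrt_logb_le {n q : ℕ} (h : √(Real.logb 2 n) ≤ q) : n ≤ 2 ^ q ^ 2 := by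
  rcases n.eq_zero_or_pos with rfl | hn
  · exact Nat.zero_le _
  have hlog : Real.logb 2 n ≤ (q ^ 2 : ℕ) := mod_cast (Real.sqrt_le_left (by positivity)).1 h
  rw [Real.logb_le_iff_le_rpow one_lt_two (by positivity), Real.rpow_natCast] at hlog
  exact_mod_cast hlog

namespace DDegenerate

variable {H : SimpleGraph W} {d : ℕ}

lemma induction [DecidableEq W] (hH : DDegenerate H d) {p : Finset W → Prop} (hempty : p ∅)
    (hinsert : ∀ (s : Finset W) (v : W), v ∉ s → ∀ B : Finset W, #B ≤ d →
      (∀ u, u ∈ B ↔ u ∈ s ∧ H.Adj v u) → p s → p (insert v s)) (s : Finset W) : p s := by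
  classical
  induction s using Finset.strongInduction with
  | H s ih =>
    rcases s.eq_empty_or_nonempty with rfl | hs
    · exact hempty
    obtain ⟨v, hv, hdeg⟩ := hH s hs
    rw [← insert_erase hv]
    refine hinsert _ v (notMem_erase v s) {u ∈ s | H.Adj v u} ?_ ?_ (ih _ (erase_ssubset hv))
    · simpa [← Set.ncard_coe_finset] using hdeg
    · intro u
      simp only [mem_filter, mem_erase]
      exact ⟨fun h => ⟨⟨h.2.ne', h.1⟩, h.2⟩, fun h => ⟨h.1.2, h.2⟩⟩

-- Greedy choice of the values `f v`, each vertex having few neighbors among the earlier ones.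
lemma exists_pairwise_of_extend {X : Type*} [Finite W] [Nonempty X] (hH : DDegenerate H d)
    (P : W → X → Prop) (R : W → W → X → X → Prop) (symm : ∀ a b x y, R a b x y → R b a y x)
    (extend : ∀ (s : Finset W) (v : W), v ∉ s → ∀ B : Finset W, #B ≤ d →
      (∀ u, u ∈ B ↔ u ∈ s ∧ H.Adj v u) → ∀ f : W → X, (∀ u ∈ s, P u (f u)) →
      ∃ x, P v x ∧ ∀ u ∈ s, R v u x (f u)) :
    ∃ f : W → X, (∀ a, P a (f a)) ∧ ∀ a b, a ≠ b → R a b (f a) (f b) := by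
  classical
  have := Fintype.ofFinite W
  suffices h : ∀ s : Finset W, ∃ f : W → X, (∀ a ∈ s, P a (f a)) ∧
      ∀ a ∈ s, ∀ b ∈ s, a ≠ b → R a b (f a) (f b) by
    simpa using h univ
  refine hH.induction ⟨fun _ => Classical.arbitrary X, by simp, by simp⟩ ?_
  rintro s v hv B hB hmem ⟨f, hP, hR⟩
  obtain ⟨x, hx, hxR⟩ := extend s v hv B hB hmem f hP
  have hf : ∀ u ∈ s, Function.update f v x u = f u := fun u hu =>
    Function.update_of_ne (ne_of_mem_of_not_mem hu hv) _ _
  refine ⟨Function.update f v x, ?_, ?_⟩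
  · simp +contextual [hf, hP, hx]
  · intro a ha b hb hab
    rcases mem_insert.1 ha with rfl | has <;> rcases mem_insert.1 hb with rfl | hbs
    · exact absurd rfl hab
    · simpa [hf b hbs] using hxR b hbs
    · simpa [hf a has] using symm _ _ _ _ (hxR a has)
    · simpa [hf a has, hf b hbs] using hR a has b hbs hab

lemma nonempty_coloring [Finite W] [Fintype ι] (hH : DDegenerate H d) (hι : d < card ι) :
    Nonempty (H.Coloring ι) := by
  classical
  have : Nonempty ι := card_pos_iff.1 (by lia)
  obtain ⟨χ, -, hχ⟩ := hH.exists_pairwise_of_extend (fun _ _ => True)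
    (fun a b i j => H.Adj a b → i ≠ j) (fun a b i j h hba => (h hba.symm).symm) (by
      intro s v _ B hB hmem χ _
      obtain ⟨i, -, hi⟩ := exists_mem_notMem_of_card_lt_card
        (s := B.image χ) (t := univ) (card_image_le.trans_lt (hB.trans_lt hι))
      exact ⟨i, trivial, fun u hu hvu h => hi (h ▸ mem_image_of_mem χ ((hmem u).2 ⟨hu, hvu⟩))⟩)
  exact ⟨.mk χ fun {a b} hab => hχ a b hab.ne hab⟩

-- Fix a proper coloring of `H` by the index set of the blocks, and embed a vertex of color `j` so
-- that it is joined to all blocks but block `j`. The images of the neighbors of a vertex still to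
-- be embedded are then joined to the block of that vertex, so `extend` applies to them.
lemma exists_embedding_of_blocks [Fintype W] [Fintype ι] [Nonempty V]
    (hH : DDegenerate H d) (hι : d < card ι) {Q : V → V → Prop} (hQ : ∀ x y, Q x y → Q y x)
    (B : ι → Set V)
    (extend : ∀ j (S F : Finset V), #S ≤ d → (∀ y ∈ B j, ∀ s ∈ S, Q y s) → #F < card W →
      ∃ x ∉ F, (∀ s ∈ S, Q x s) ∧ ∀ i ≠ j, ∀ y ∈ B i, Q x y) :
    ∃ f : W ↪ V, ∀ a b, H.Adj a b → Q (f a) (f b) := by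
  classical
  obtain ⟨χ⟩ := hH.nonempty_coloring hι
  obtain ⟨f, -, hf⟩ := hH.exists_pairwise_of_extend (fun a x => ∀ i ≠ χ a, ∀ y ∈ B i, Q x y)
    (fun a b x y => x ≠ y ∧ (H.Adj a b → Q x y))
    (fun a b x y h => ⟨h.1.symm, fun hba => hQ _ _ (h.2 hba.symm)⟩) (by
      intro s v hv N hN hmem f hf
      have hjoin : ∀ y ∈ B (χ v), ∀ z ∈ N.image f, Q y z := by
        intro y hy z hz
        obtain ⟨u, hu, rfl⟩ := mem_image.1 hz
        obtain ⟨hus, hvu⟩ := (hmem u).1 hu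
        exact hQ _ _ (hf u hus (χ v) (χ.valid hvu) y hy)
      have hcard : #(s.image f) < card W :=
        card_image_le.trans_lt (card_lt_univ_of_notMem hv)
      obtain ⟨x, hxF, hxS, hxB⟩ :=
        extend (χ v) (N.image f) (s.image f) (card_image_le.trans hN) hjoin hcard
      refine ⟨x, hxB, fun u hu => ⟨fun h => hxF (h ▸ mem_image_of_mem f hu), fun hvu => ?_⟩⟩
      exact hxS _ (mem_image_of_mem f ((hmem u).2 ⟨hu, hvu⟩)))
  refine ⟨⟨f, fun a b hab => ?_⟩, fun a b hab => (hf a b hab.ne).2 hab⟩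
  by_contra hne
  exact (hf a b hne).1 hab

theorem exists_monochromatic_embedding [Fintype W] [Fintype V] [Nonempty V] [Fintype κ]
    (hH : DDegenerate H d) (C : V → V → κ) (hC : ∀ x y, C x y = C y x) (q : ℕ)
    (hV : card κ ^ (card κ * d + 1) * (card κ * d + 1) *
      card κ ^ (q ^ 2 * (card κ * d + 1).choose 2) * (card V + 1) ^ d * card W ^ q < card V ^ q) :
    ∃ k, ∃ f : W ↪ V, ∀ a b, H.Adj a b → C (f a) (f b) = k := by
  classical
  obtain ⟨T, c, hT, hext⟩ := exists_forwardColored_extendable (ι := Fin q) C (card κ * d) d (card W)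
    (by simpa using hV)
  obtain ⟨k, hk⟩ := exists_lt_card_fiber_of_mul_lt_card c (n := d) (by simp)
  refine ⟨k, hH.exists_embedding_of_blocks (ι := {i // c i = k}) (by rwa [Fintype.card_subtype])
    (fun x y h => (hC y x).trans h) (fun i => Set.range (T i)) ?_⟩
  rintro ⟨j, rfl⟩ S F hS hjoin hF
  have hblock : ∀ b, T j b ∈ commonNeighbors C c j S (j.removeNth T) := fun b =>
    mem_commonNeighbors_removeNth.2 ⟨hjoin _ ⟨b, rfl⟩,
      fun i hij hi b' => (hT.eq_of_ne hC hij.symm hi.symm b b').trans hi⟩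
  obtain ⟨x, hx, hxF⟩ := exists_mem_notMem_of_card_lt_card (hF.trans_le (hext j S hS hblock))
  rw [mem_commonNeighbors_removeNth] at hx
  refine ⟨x, hxF, hx.1, ?_⟩
  rintro ⟨i, hi⟩ hij _ ⟨b, rfl⟩
  exact hx.2 i (fun h => hij (Subtype.ext h)) hi b

theorem hasRamsey_of_lt [Fintype W] (hH : DDegenerate H d) (q N : ℕ) [NeZero N]
    (hN : 2 ^ (2 * d + 1) * (2 * d + 1) * 2 ^ (q ^ 2 * (2 * d + 1).choose 2) * (N + 1) ^ d *
      card W ^ q < N ^ q) :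
    HasRamsey H N := by
  classical
  intro C
  obtain ⟨k, f, hf⟩ := hH.exists_monochromatic_embedding (V := Fin N)
    (fun x y => decide (C.Adj x y)) (by simp [C.adj_comm]) q (by simpa using hN)
  cases k with
  | true => exact .inl ⟨f, by simpa using hf⟩
  | false => exact .inr ⟨f, fun a b hab => ⟨f.injective.ne hab.ne, by simpa using hf a b hab⟩⟩

theorem hasRamsey_mul_two_pow [Fintype W] (hH : DDegenerate H d) (hW : 0 < card W) {q : ℕ}
    (hq : 2 * d < q) (hWq : card W ≤ 2 ^ q ^ 2) :
    HasRamsey H (card W * 2 ^ (4 * (d + 2) ^ 2 * q)) := by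
  have : NeZero (card W * 2 ^ (4 * (d + 2) ^ 2 * q)) := ⟨by positivity⟩
  refine hH.hasRamsey_of_lt q _ ?_
  calc _ < 2 ^ (4 * (d + 2) ^ 2 * q ^ 2) * card W ^ q := by
        gcongr
        exact two_pow_mul_add_one_pow_lt_two_pow hq hWq
    _ = (card W * 2 ^ (4 * (d + 2) ^ 2 * q)) ^ q := by ring

end DDegenerate

theorem stmt_11_general [Fintype W] {H : SimpleGraph W} {d : ℕ} (hH : DDegenerate H d)
    (hW : 2 ≤ card W) :
    (ramseyNumber H : ℝ) ≤
      2 ^ (8 * (d + 2) ^ 2 * (d + 1) * Real.sqrt (Real.logb 2 (card W))) * card W := by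
  set n := card W
  set L := Real.sqrt (Real.logb 2 n)
  have hn : (2 : ℝ) ≤ n := mod_cast hW
  have hlog : 1 ≤ Real.logb 2 n := by
    rw [Real.le_logb_iff_rpow_le one_lt_two (by linarith)]
    simpa using hn
  have hL : 1 ≤ L := Real.one_le_sqrt.2 hlog
  obtain ⟨q, hle, hlt⟩ : ∃ q : ℕ, (2 * d + 1) * L ≤ q ∧ q < (2 * d + 1) * L + 1 :=
    ⟨_, Nat.le_ceil _, Nat.ceil_lt_add_one (by positivity)⟩
  have hdq : 2 * d < q := by
    have : (2 * d + 1 : ℝ) ≤ q := (le_mul_of_one_le_right (by positivity) hL).trans hle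
    exact_mod_cast this
  have hLq : L ≤ q := (le_mul_of_one_le_left (by positivity) (by simp)).trans hle
  have hram : ramseyNumber H ≤ n * 2 ^ (4 * (d + 2) ^ 2 * q) :=
    Nat.sInf_le (hH.hasRamsey_mul_two_pow (by lia) hdq (le_two_pow_sq_of_sqrt_logb_le hLq))
  calc (ramseyNumber H : ℝ) ≤ 2 ^ ((4 * (d + 2) ^ 2 * q : ℕ) : ℝ) * n := by
        rw [Real.rpow_natCast, mul_comm]
        exact_mod_cast hram
    _ ≤ 2 ^ (8 * (d + 2) ^ 2 * (d + 1) * L) * n := by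
        gcongr
        · exact one_le_two
        · push_cast
          nlinarith

end

/-- For every positive integer `d` there is a constant `c_d` such that every `d`-degenerate
graph `H` on `n ≥ 2` vertices satisfies `r(H) ≤ 2^{c_d √(log n)} · n`
(logarithm base 2). -/
theorem stmt_11 (d : ℕ) (hd : 1 ≤ d) :
    ∃ c : ℝ, 0 < c ∧ ∀ (W : Type) (_ : Fintype W) (H : SimpleGraph W) (n : ℕ),
      Fintype.card W = n → 2 ≤ n → DDegenerate H d →
      (ramseyNumber H : ℝ) ≤ 2 ^ (c * Real.sqrt (Real.logb 2 n)) * n := by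
  exact ⟨8 * (d + 2) ^ 2 * (d + 1), by positivity, fun W _ H n hWn hn hH => by
    subst hWn
    exact stmt_11_general hH hn⟩
end

section
/- There is a constant c such that every (d,Δ)-degenerate graph H (with d,Δ ≥ 2) with n vertices and chromatic number q satisfies r(H) ≤ (d^d · Δ)^{c log q} · n. More precisely, r(H) ≤ (2^{7d+8} d^{3d+2} Δ)^{log₂ q} · n. -/
/-!
Take a red/blue coloring of a large complete graph and embed `H` greedily in red along the
degenerate ordering, keeping for every later vertex a set of candidates that shrinks by a factor of
at most `E` per embedded neighbor. When `v` is embedded, only the at most `Δ` candidate sets given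
by the traces of its later neighbors change, so if the embedding gets stuck then there are two large
sets `X`, `Y` with red density at most `1 / E` between them. Repeating this inside `X` and inside
`Y`, about `log q` times in depth, produces `q` sets of equal size with few red edges between any
two of them. After deleting the vertices of large red degree, `H` embeds greedily in blue with each
color class going to its own set.
-/

section

open Finset Function
open scoped SimpleGraph

section DoubleCounting

theorem card_biUnion_le_of_forall_mul_card_le {α β : Type*} [DecidableEq β] {F : Finset α}
    {f : α → Finset β} {k c : ℕ} (hF : #F ≤ k) (hf : ∀ i ∈ F, k * #(f i) ≤ c) :
    #(F.biUnion f) ≤ c := by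
  obtain rfl | hk := k.eq_zero_or_pos
  · simp_all
  refine Nat.le_of_mul_le_mul_left ?_ hk
  calc k * #(F.biUnion f) ≤ k * ∑ i ∈ F, #(f i) := by gcongr; exact card_biUnion_le
    _ = ∑ i ∈ F, k * #(f i) := mul_sum ..
    _ ≤ #F * c := sum_le_card_nsmul F _ c hf
    _ ≤ k * c := by gcongr

variable {V : Type*} {G : SimpleGraph V} [DecidableRel G.Adj]

theorem card_interedges_eq_sum (A B : Finset V) :
    #(G.interedges A B) = ∑ x ∈ A, #{y ∈ B | G.Adj x y} := by
  simp only [SimpleGraph.interedges_def, card_filter, sum_product]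

theorem card_interedges_comm (A B : Finset V) :
    #(G.interedges A B) = #(G.interedges B A) :=
  haveI : Std.Symm G.Adj := G.symm
  Rel.card_interedges_comm (r := G.Adj) A B

theorem mul_card_interedges_le {A B : Finset V} {k c : ℕ}
    (h : ∀ x ∈ A, k * #{y ∈ B | G.Adj x y} ≤ c) : k * #(G.interedges A B) ≤ #A * c := by
  rw [card_interedges_eq_sum, mul_sum]
  exact sum_le_card_nsmul A _ c h

theorem card_filter_lt_mul_le_mul_card_interedges (A B : Finset V) (k c : ℕ) :
    #{x ∈ A | c < k * #{y ∈ B | G.Adj x y}} * c ≤ k * #(G.interedges A B) := by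
  rw [card_interedges_eq_sum, mul_sum]
  calc #{x ∈ A | c < k * #{y ∈ B | G.Adj x y}} * c
      ≤ ∑ x ∈ A with c < k * #{y ∈ B | G.Adj x y}, k * #{y ∈ B | G.Adj x y} :=
        card_nsmul_le_sum _ _ _ fun x hx => (mem_filter.1 hx).2.le
    _ ≤ ∑ x ∈ A, k * #{y ∈ B | G.Adj x y} := sum_le_sum_of_subset (filter_subset _ _)

theorem card_le_two_mul_card_filter_mul_le {A Y : Finset V} {E : ℕ}
    (hA : ∀ x ∈ A, E * #{y ∈ Y | G.Adj x y} ≤ #Y) :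
    #Y ≤ 2 * #{y ∈ Y | E * #{x ∈ A | G.Adj y x} ≤ 2 * #A} := by
  obtain rfl | hne := A.eq_empty_or_nonempty
  · simp; omega
  have hdense : 2 * #{y ∈ Y | 2 * #A < E * #{x ∈ A | G.Adj y x}} ≤ #Y := by
    refine Nat.le_of_mul_le_mul_left ?_ hne.card_pos
    calc #A * (2 * #{y ∈ Y | 2 * #A < E * #{x ∈ A | G.Adj y x}})
        = #{y ∈ Y | 2 * #A < E * #{x ∈ A | G.Adj y x}} * (2 * #A) := by ring
      _ ≤ E * #(G.interedges Y A) := card_filter_lt_mul_le_mul_card_interedges ..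
      _ = E * #(G.interedges A Y) := by rw [card_interedges_comm]
      _ ≤ #A * #Y := mul_card_interedges_le hA
  have hsplit := card_filter_add_card_filter_not (s := Y)
    fun y => E * #{x ∈ A | G.Adj y x} ≤ 2 * #A
  simp only [not_le] at hsplit
  omega

end DoubleCounting

section VertexOrder

variable {W : Type*} [LinearOrder W] {H : SimpleGraph W} {d Δ : ℕ}

/-- Every vertex has at most `d` neighbors preceding it in the order: the first half of
`(d, Δ)`-degeneracy of a fixed vertex ordering. -/
def BackwardDegreeLE (H : SimpleGraph W) (d : ℕ) : Prop :=
  ∀ v, {u | u < v ∧ H.Adj u v}.ncard ≤ d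

/-- The later neighbors of any vertex `v` have at most `Δ` distinct traces on the vertices up to
`v`: the second half of `(d, Δ)`-degeneracy of a fixed vertex ordering. -/
def ForwardTracesLE (H : SimpleGraph W) (Δ : ℕ) : Prop :=
  ∀ v, {S : Set W | ∃ w, v < w ∧ H.Adj w v ∧ S = {u | H.Adj w u ∧ u ≤ v}}.ncard ≤ Δ

theorem DDeltaDegenerate.exists_linearOrder {W : Type*} [Fintype W] {H : SimpleGraph W} {d Δ : ℕ}
    (h : DDeltaDegenerate H d Δ) :
    ∃ _ : LinearOrder W, BackwardDegreeLE H d ∧ ForwardTracesLE H Δ := by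
  obtain ⟨f, hf⟩ := h
  let order : LinearOrder W := LinearOrder.lift' f.symm f.symm.injective
  have lt_iff (u v : W) : u < v ↔ f.symm u < f.symm v := Iff.rfl
  have le_iff (u v : W) : u ≤ v ↔ f.symm u ≤ f.symm v := Iff.rfl
  refine ⟨order, fun v => ?_, fun v => ?_⟩
  · rw [← Set.ncard_preimage_of_injective_subset_range f.injective (by simp)]
    simpa [lt_iff] using (hf (f.symm v)).1
  · simpa [lt_iff, le_iff, f.symm.exists_congr_left] using (hf (f.symm v)).2

theorem BackwardDegreeLE.card_adj_le [Finite W] [DecidableRel H.Adj] (hH : BackwardDegreeLE H d)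
    {a : W} {s : Finset W} (hs : ∀ b ∈ s, b < a) :
    #{b ∈ s | H.Adj a b} ≤ d := by
  rw [← Set.ncard_coe_finset]
  refine (Set.ncard_le_ncard (fun b hb => ?_) (Set.toFinite _)).trans (hH a)
  obtain ⟨hbs, hab⟩ := mem_filter.1 hb
  exact ⟨hs b hbs, hab.symm⟩

theorem ForwardTracesLE.card_traces_le [Fintype W] [DecidableRel H.Adj] (hH : ForwardTracesLE H Δ)
    {a : W} {s : Finset W} (hs : ∀ b ∈ s, b < a) :
    #(({j | a < j ∧ H.Adj j a} : Finset W).image fun j => {b ∈ s | H.Adj j b}) ≤ Δ := by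
  classical
  rw [← Set.ncard_coe_finset]
  refine le_trans (Set.ncard_le_ncard ?_ (Set.toFinite _))
    ((Set.ncard_image_le (f := fun S : Set W => ({b ∈ s | b ∈ S} : Finset W))
      (Set.toFinite _)).trans (hH a))
  rw [coe_image]
  rintro _ ⟨j, hj, rfl⟩
  obtain ⟨haj, hadj⟩ : a < j ∧ H.Adj j a := by simpa using hj
  refine ⟨_, ⟨j, haj, hadj, rfl⟩, ?_⟩
  ext b
  simpa using fun hb _ => (hs b hb).le

theorem ForwardTracesLE.pos [Finite W] (hH : ForwardTracesLE H Δ) (hne : H ≠ ⊥) : 0 < Δ := by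
  classical
  have := Fintype.ofFinite W
  obtain ⟨u, v, huv⟩ := SimpleGraph.ne_bot_iff_exists_adj.1 hne
  wlog hlt : u < v generalizing u v
  · exact this v u huv.symm (huv.ne.lt_or_gt.resolve_left hlt)
  refine lt_of_lt_of_le ?_ (hH.card_traces_le (a := u) (s := ∅) (by simp))
  exact card_pos.2 (.image ⟨v, by simpa using ⟨hlt, huv.symm⟩⟩ _)

end VertexOrder

section GreedyEmbedding

variable {W V : Type*} [LinearOrder W] {H : SimpleGraph W} {G : SimpleGraph V}

/- The hypothesis `x ≠ φ b` in `hstep` costs nothing, since the greedy choice avoids the vertices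
already used, and it makes the lemma applicable to complements. -/
theorem isContained_of_greedy [Fintype W] {I : Finset W → (W → V) → Prop} (h0 : ∃ φ, I ∅ φ)
    (hstep : ∀ a s φ, (∀ b ∈ s, b < a) → I s φ → ∃ C : Finset V, Fintype.card W ≤ #C ∧
      ∀ x ∈ C, (∀ b ∈ s, H.Adj a b → x ≠ φ b → G.Adj x (φ b)) ∧ I (insert a s) (update φ a x)) :
    H ⊑ G := by
  classical
  suffices ∀ s : Finset W, ∃ φ : W → V, Set.InjOn φ s ∧
      (∀ b ∈ s, ∀ c ∈ s, H.Adj b c → G.Adj (φ b) (φ c)) ∧ I s φ by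
    obtain ⟨φ, hinj, hadj, -⟩ := this univ
    exact ⟨⟨φ, hadj _ (mem_univ _) _ (mem_univ _)⟩, by simpa using hinj⟩
  intro s
  induction s using Finset.induction_on_max with
  | empty => simpa using h0
  | insert a s hs ih =>
    obtain ⟨φ, hinj, hadj, hI⟩ := ih
    obtain ⟨C, hC, hext⟩ := hstep a s φ hs hI
    have ha : a ∉ s := fun h => (hs a h).false
    have hused : #(s.image φ) < #C :=
      card_image_le.trans_lt ((card_lt_univ_of_notMem ha).trans_le hC)
    obtain ⟨x, hxC, hxused⟩ := exists_mem_notMem_of_card_lt_card hused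
    have hx : ∀ b ∈ s, x ≠ φ b := fun b hb h => hxused (h ▸ mem_image_of_mem φ hb)
    obtain ⟨hxadj, hxI⟩ := hext x hxC
    have hupdate : ∀ b ∈ s, update φ a x b = φ b :=
      fun b hb => update_of_ne (hs b hb).ne x φ
    refine ⟨update φ a x, ?_, ?_, hxI⟩
    · rw [coe_insert, Set.injOn_insert (by simpa using ha)]
      refine ⟨hinj.congr fun b hb => (hupdate b hb).symm, ?_⟩
      rintro ⟨b, hb, hbx⟩
      exact hx b hb (by simpa [hupdate b hb] using hbx.symm)
    · have hxs : ∀ b ∈ s, H.Adj a b → G.Adj x (φ b) :=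
        fun b hb hab => hxadj b hb hab (hx b hb)
      simp only [forall_mem_insert, update_self, SimpleGraph.irrefl, false_imp_iff, true_and]
      refine ⟨fun b hb => hupdate b hb ▸ hxs b hb, fun b hb => ⟨fun hba => ?_, fun c hc => ?_⟩⟩
      · exact hupdate b hb ▸ (hxs b hb hba.symm).symm
      · rw [hupdate b hb, hupdate c hc]
        exact hadj b hb c hc

/- A coloring with `d + 1` colors is a copy of `H` in the blow-up of the complete graph on
`Fin (d + 1)` in which every vertex is replaced by `|W|` independent ones. -/
theorem BackwardDegreeLE.colorable [Finite W] {d : ℕ} (hH : BackwardDegreeLE H d) :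
    H.Colorable (d + 1) := by
  classical
  have := Fintype.ofFinite W
  suffices H ⊑ (⊤ : SimpleGraph (Fin (d + 1))).comap (Prod.fst : _ × W → _) from
    ⟨.comp (.comap Prod.fst ⊤) this.some.toHom⟩
  refine isContained_of_greedy (I := fun _ _ => True) ⟨fun w => (0, w), trivial⟩ ?_
  intro a s φ hs _
  let usedColors := {b ∈ s | H.Adj a b}.image fun b => (φ b).1
  refine ⟨usedColorsᶜ ×ˢ univ, ?_, fun x hx => ⟨fun b hb hab _ => ?_, trivial⟩⟩
  · have hused : #usedColors ≤ d := card_image_le.trans (hH.card_adj_le hs)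
    rw [card_product, card_compl, Fintype.card_fin, card_univ]
    exact Nat.le_mul_of_pos_left _ (by omega)
  · have hxused : x.1 ∉ usedColors := by simpa using hx
    exact fun hxb => hxused (mem_image.2 ⟨b, mem_filter.2 ⟨hb, hab⟩, hxb.symm⟩)

end GreedyEmbedding

section RedEmbedding

variable {W V : Type*} {G : SimpleGraph V} [DecidableRel G.Adj] {U : Finset V}

/-- The vertices of `U` that are `G`-adjacent to the image under `φ` of every element of `S`. For
`S` the set of embedded neighbors of a vertex `j`, these are the candidates for the image of
`j`. -/
def jointNeighbors (G : SimpleGraph V) [DecidableRel G.Adj] (U : Finset V) (φ : W → V)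
    (S : Finset W) : Finset V :=
  {x ∈ U | ∀ b ∈ S, G.Adj x (φ b)}

theorem jointNeighbors_subset (φ : W → V) (S : Finset W) : jointNeighbors G U φ S ⊆ U :=
  filter_subset _ _

theorem mem_jointNeighbors {φ : W → V} {S : Finset W} {x : V} :
    x ∈ jointNeighbors G U φ S ↔ x ∈ U ∧ ∀ b ∈ S, G.Adj x (φ b) := by
  simp only [jointNeighbors, mem_filter]

section Update

variable [DecidableEq W] {φ : W → V} {a : W} {S : Finset W}

theorem jointNeighbors_update (ha : a ∉ S) (x : V) :
    jointNeighbors G U (update φ a x) S = jointNeighbors G U φ S := by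
  refine filter_congr fun y _ => forall₂_congr fun b hb => ?_
  rw [update_of_ne (ne_of_mem_of_not_mem hb ha)]

theorem jointNeighbors_insert_update (ha : a ∉ S) (x : V) :
    jointNeighbors G U (update φ a x) (insert a S) =
      {y ∈ jointNeighbors G U φ S | G.Adj x y} := by
  rw [← jointNeighbors_update ha x]
  ext y
  simp only [mem_jointNeighbors, mem_filter, forall_mem_insert, update_self, G.adj_comm x y]
  tauto

end Update

variable [LinearOrder W] {H : SimpleGraph W} {d Δ E : ℕ}

section Invariant

variable [DecidableRel H.Adj] {s : Finset W} {φ : W → V}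

/-- The invariant of the greedy embedding of `H` into `G`: every vertex `j` after `s` still has at
least a fraction `E⁻ᵗ` of `U` as candidates for its image, where `t` is the number of its neighbors
in `s`. -/
def IsRich (H : SimpleGraph W) [DecidableRel H.Adj] (G : SimpleGraph V) [DecidableRel G.Adj]
    (U : Finset V) (E : ℕ) (s : Finset W) (φ : W → V) : Prop :=
  ∀ j, (∀ b ∈ s, b < j) →
    #U ≤ E ^ #{b ∈ s | H.Adj j b} * #(jointNeighbors G U φ {b ∈ s | H.Adj j b})

theorem IsRich.insert_update {a : W} {x : V} (hφ : IsRich H G U E s φ) (hs : ∀ b ∈ s, b < a)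
    (hx : ∀ j, a < j → H.Adj j a → #(jointNeighbors G U φ {b ∈ s | H.Adj j b}) ≤
      E * #{y ∈ jointNeighbors G U φ {b ∈ s | H.Adj j b} | G.Adj x y}) :
    IsRich H G U E (insert a s) (update φ a x) := by
  intro j hj
  obtain ⟨haj, hsj⟩ := forall_mem_insert _ _ _ |>.1 hj
  have ha : a ∉ {b ∈ s | H.Adj j b} := fun h => (hs a (mem_filter.1 h).1).false
  rw [filter_insert]
  split_ifs with hadj
  · rw [card_insert_of_notMem ha, jointNeighbors_insert_update ha, pow_succ, mul_assoc]
    exact (hφ j hsj).trans (by gcongr; exact hx j haj hadj)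
  · rw [jointNeighbors_update ha]
    exact hφ j hsj

theorem IsRich.card_mul_le [Finite W] {a j : W} (hφ : IsRich H G U E s φ)
    (hd : BackwardDegreeLE H d) (hE : 0 < E) (hs : ∀ b ∈ s, b < a) (haj : a < j)
    (hadj : H.Adj j a) :
    #U * E ≤ E ^ d * #(jointNeighbors G U φ {b ∈ s | H.Adj j b}) := by
  have hsj : ∀ b ∈ s, b < j := fun b hb => (hs b hb).trans haj
  have hdeg : #{b ∈ s | H.Adj j b} + 1 ≤ d := by
    have ha : a ∉ {b ∈ s | H.Adj j b} := fun h => (hs a (mem_filter.1 h).1).false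
    simpa only [filter_insert, if_pos hadj, card_insert_of_notMem ha] using
      hd.card_adj_le (s := insert a s) ((forall_mem_insert _ _ _).2 ⟨haj, hsj⟩)
  calc #U * E ≤ E ^ #{b ∈ s | H.Adj j b} * #(jointNeighbors G U φ {b ∈ s | H.Adj j b}) * E := by
        gcongr; exact hφ j hsj
    _ = E ^ (#{b ∈ s | H.Adj j b} + 1) * #(jointNeighbors G U φ {b ∈ s | H.Adj j b}) := by ring
    _ ≤ E ^ d * #(jointNeighbors G U φ {b ∈ s | H.Adj j b}) := by gcongr

theorem IsRich.exists_candidates [Fintype W] {a : W} (hφ : IsRich H G U E s φ)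
    (hd : BackwardDegreeLE H d) (hΔ : ForwardTracesLE H Δ) (hE : 0 < E)
    (hU : 2 * Fintype.card W * E ^ d ≤ #U)
    (hsparse : ∀ Y ⊆ U, #U * E ≤ E ^ d * #Y →
      2 * Δ * E ^ d * #{x ∈ U | E * #{y ∈ Y | G.Adj x y} ≤ #Y} ≤ #U)
    (hs : ∀ b ∈ s, b < a) :
    ∃ C : Finset V, Fintype.card W ≤ #C ∧ ∀ x ∈ C, (∀ b ∈ s, H.Adj a b → G.Adj x (φ b)) ∧
      IsRich H G U E (insert a s) (update φ a x) := by
  classical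
  let traces := ({j | a < j ∧ H.Adj j a} : Finset W).image fun j => {b ∈ s | H.Adj j b}
  let bad (S : Finset W) : Finset V :=
    {x ∈ U | E * #{y ∈ jointNeighbors G U φ S | G.Adj x y} ≤ #(jointNeighbors G U φ S)}
  let N := jointNeighbors G U φ {b ∈ s | H.Adj a b}
  have hEd : 0 < 2 * E ^ d := by positivity
  have hbad : #(traces.biUnion bad) ≤ #U / (2 * E ^ d) := by
    refine card_biUnion_le_of_forall_mul_card_le (hΔ.card_traces_le hs) (forall_mem_image.2 ?_)
    intro j hj
    obtain ⟨haj, hadj⟩ := (mem_filter_univ _).1 hj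
    rw [Nat.le_div_iff_mul_le hEd]
    calc Δ * #(bad {b ∈ s | H.Adj j b}) * (2 * E ^ d)
        = 2 * Δ * E ^ d * #(bad {b ∈ s | H.Adj j b}) := by ring
      _ ≤ #U := hsparse _ (jointNeighbors_subset φ _) (hφ.card_mul_le hd hE hs haj hadj)
  have hN : #U ≤ E ^ d * #N := (hφ a hs).trans (by gcongr; exact hd.card_adj_le hs)
  refine ⟨N \ traces.biUnion bad, ?_, fun x hx => ?_⟩
  · have : Fintype.card W + #(traces.biUnion bad) ≤ #N := by
      refine Nat.le_of_mul_le_mul_left ?_ hEd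
      rw [Nat.le_div_iff_mul_le hEd] at hbad
      linarith
    exact (Nat.le_sub_of_add_le this).trans (le_card_sdiff _ _)
  · obtain ⟨hxN, hxbad⟩ := mem_sdiff.1 hx
    obtain ⟨hxU, hxadj⟩ := mem_jointNeighbors.1 hxN
    refine ⟨fun b hb hab => hxadj b (mem_filter.2 ⟨hb, hab⟩),
      hφ.insert_update hs fun j haj hadj => ?_⟩
    by_contra! hlt
    exact hxbad (mem_biUnion.2 ⟨_, mem_image_of_mem _ ((mem_filter_univ j).2 ⟨haj, hadj⟩),
      mem_filter.2 ⟨hxU, hlt.le⟩⟩)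

end Invariant

variable [Fintype W]

theorem isContained_of_forall_card_sparse_le (hd : BackwardDegreeLE H d) (hΔ : ForwardTracesLE H Δ)
    (hE : 0 < E) (hU : 2 * Fintype.card W * E ^ d ≤ #U)
    (hsparse : ∀ Y ⊆ U, #U * E ≤ E ^ d * #Y →
      2 * Δ * E ^ d * #{x ∈ U | E * #{y ∈ Y | G.Adj x y} ≤ #Y} ≤ #U) :
    H ⊑ G := by
  classical
  cases isEmpty_or_nonempty W
  · exact .of_isEmpty
  have hUpos : 0 < 2 * Fintype.card W * E ^ d := by positivity
  obtain ⟨v, -⟩ := card_pos.1 (hUpos.trans_le hU)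
  refine isContained_of_greedy (I := IsRich H G U E)
    ⟨fun _ => v, by simp [IsRich, jointNeighbors]⟩ fun a s φ hs hφ => ?_
  obtain ⟨C, hC, hext⟩ := hφ.exists_candidates hd hΔ hE hU hsparse hs
  exact ⟨C, hC, fun x hx => ⟨fun b hb hab _ => (hext x hx).1 b hb hab, (hext x hx).2⟩⟩

theorem exists_sparse_pair_of_not_isContained {k l : ℕ} (hd : BackwardDegreeLE H d)
    (hΔ : ForwardTracesLE H Δ) (hE : 0 < E) (hH : ¬ H ⊑ G)
    (hU : 2 * Fintype.card W * E ^ d ≤ #U) (hk : 2 * Δ * E ^ d * k ≤ #U)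
    (hl : 2 * E ^ d * l ≤ #U) :
    ∃ X ⊆ U, ∃ Y ⊆ U, k ≤ #X ∧ 2 * l ≤ #Y ∧ ∀ x ∈ X, E * #{y ∈ Y | G.Adj x y} ≤ #Y := by
  contrapose! hH
  refine isContained_of_forall_card_sparse_le hd hΔ hE hU fun Y hYU hY => ?_
  have hlY : 2 * l ≤ #Y := by
    refine Nat.le_of_mul_le_mul_left ?_ (pow_pos hE d)
    calc E ^ d * (2 * l) = 2 * E ^ d * l := by ring
      _ ≤ #U * E := hl.trans (Nat.le_mul_of_pos_right _ hE)
      _ ≤ E ^ d * #Y := hY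
  have hX : #{x ∈ U | E * #{y ∈ Y | G.Adj x y} ≤ #Y} ≤ k := by
    by_contra! hlt
    obtain ⟨x, hx, hxY⟩ := hH _ (filter_subset _ _) Y hYU hlt.le hlY
    exact hxY.not_ge (mem_filter.1 hx).2
  exact (Nat.mul_le_mul_left _ hX).trans hk

end RedEmbedding

section SparseFamilies

variable {V : Type*} {G : SimpleGraph V} [DecidableRel G.Adj] {E Q m : ℕ}

/-- Every set of at least `s` vertices contains `q` sets of `m` vertices with at most
`Q / E * m ^ 2` edges between any two of them. The sets are not required to be disjoint. -/
def HasSparseFamilies (G : SimpleGraph V) [DecidableRel G.Adj] (E Q m q s : ℕ) : Prop :=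
  ∀ U : Finset V, s ≤ #U → ∃ A : Fin q → Finset V, (∀ i, A i ⊆ U ∧ #(A i) = m) ∧
    Pairwise fun i j => E * #(G.interedges (A i) (A j)) ≤ Q * m ^ 2

theorem hasSparseFamilies_one : HasSparseFamilies G E Q m 1 m := by
  intro U hU
  obtain ⟨A, hA⟩ := exists_subset_card_eq hU
  exact ⟨fun _ => A, fun _ => hA, Subsingleton.pairwise⟩

theorem HasSparseFamilies.add {q₁ q₂ s₁ s₂ s : ℕ}
    (h₁ : HasSparseFamilies G E Q m q₁ s₁) (h₂ : HasSparseFamilies G E Q m q₂ s₂)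
    (hQ : 2 * q₁ ≤ Q)
    (hpair : ∀ U : Finset V, s ≤ #U → ∃ X ⊆ U, ∃ Y ⊆ U, s₁ ≤ #X ∧ 2 * s₂ ≤ #Y ∧
      ∀ x ∈ X, E * #{y ∈ Y | G.Adj x y} ≤ #Y) :
    HasSparseFamilies G E Q m (q₁ + q₂) s := by
  classical
  intro U hU
  obtain ⟨X, hXU, Y, hYU, hX, hY, hXY⟩ := hpair U hU
  obtain ⟨A, hA, hAA⟩ := h₁ X hX
  let A' := univ.biUnion A
  have hA' : #A' ≤ q₁ * m := by
    simpa using card_biUnion_le_card_mul univ A m fun i _ => (hA i).2.le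
  have hA'X : A' ⊆ X := biUnion_subset.2 fun i _ => (hA i).1
  let Y' := {y ∈ Y | E * #{x ∈ A' | G.Adj y x} ≤ 2 * #A'}
  have hY' : #Y ≤ 2 * #Y' := card_le_two_mul_card_filter_mul_le fun x hx => hXY x (hA'X hx)
  obtain ⟨B, hB, hBB⟩ := h₂ Y' (by omega)
  have hBA (j i) : E * #(G.interedges (B j) (A i)) ≤ Q * m ^ 2 := by
    calc E * #(G.interedges (B j) (A i)) ≤ #(B j) * (Q * m) := by
          refine mul_card_interedges_le fun y hy => ?_
          calc E * #{x ∈ A i | G.Adj y x} ≤ E * #{x ∈ A' | G.Adj y x} := by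
                gcongr; exact subset_biUnion_of_mem A (mem_univ i)
            _ ≤ 2 * #A' := (mem_filter.1 ((hB j).1 hy)).2
            _ ≤ 2 * q₁ * m := by linarith
            _ ≤ Q * m := by gcongr
      _ = Q * m ^ 2 := by rw [(hB j).2]; ring
  refine ⟨Fin.append A B, fun k => ?_, fun k l hkl => ?_⟩
  · induction k using Fin.addCases with
    | left i => simpa using ⟨(hA i).1.trans hXU, (hA i).2⟩
    | right j => simpa using ⟨(hB j).1.trans ((filter_subset _ _).trans hYU), (hB j).2⟩
  · induction k using Fin.addCases <;> induction l using Fin.addCases <;>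
      simp only [Fin.append_left, Fin.append_right]
    case left.left i j => exact hAA (by simpa using hkl)
    case left.right i j => exact card_interedges_comm (G := G) _ _ ▸ hBA j i
    case right.left j i => exact hBA j i
    case right.right i j => exact hBB (by simpa using hkl)

theorem hasSparseFamilies_of_not_isContained {W : Type*} [LinearOrder W] [Fintype W]
    {H : SimpleGraph W} {d Δ q : ℕ} (hd : BackwardDegreeLE H d) (hΔ : ForwardTracesLE H Δ)
    (hΔ0 : 0 < Δ) (hE : 0 < E) (hm : Fintype.card W ≤ m) (hH : ¬ H ⊑ G) (hq : 0 < q)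
    (hqQ : q ≤ Q) :
    HasSparseFamilies G E Q m q ((2 * E ^ d) ^ Nat.clog 2 q * Δ ^ Nat.log 2 q * m) := by
  induction q using Nat.strong_induction_on with
  | _ q ih =>
    obtain rfl | hq2 : q = 1 ∨ 2 ≤ q := by omega
    · simpa using hasSparseFamilies_one
    have hhalf : q / 2 + (q + 1) / 2 = q := by omega
    have hclog : Nat.clog 2 q = Nat.clog 2 ((q + 1) / 2) + 1 := Nat.clog_of_two_le one_lt_two hq2
    have hlog : Nat.log 2 q = Nat.log 2 (q / 2) + 1 := Nat.log_of_one_lt_of_le one_lt_two hq2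
    have hadd := (ih (q / 2) (by omega) (by omega) (by omega)).add
      (ih ((q + 1) / 2) (by omega) (by omega) (by omega)) (by omega)
      (s := (2 * E ^ d) ^ Nat.clog 2 q * Δ ^ Nat.log 2 q * m) fun U hU =>
        exists_sparse_pair_of_not_isContained hd hΔ hE hH (hU.trans' ?_) (hU.trans' ?_)
          (hU.trans' ?_)
    · rwa [hhalf] at hadd
    · calc 2 * Fintype.card W * E ^ d ≤ (2 * E ^ d) ^ 1 * 1 * m := by
            rw [pow_one, mul_one, mul_right_comm]; gcongr
        _ ≤ (2 * E ^ d) ^ Nat.clog 2 q * Δ ^ Nat.log 2 q * m := by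
            gcongr
            · exact Nat.succ_le_of_lt (by positivity)
            · omega
            · exact Nat.one_le_pow _ _ hΔ0
    · calc 2 * Δ * E ^ d * ((2 * E ^ d) ^ Nat.clog 2 (q / 2) * Δ ^ Nat.log 2 (q / 2) * m)
          = (2 * E ^ d) ^ (Nat.clog 2 (q / 2) + 1) * Δ ^ Nat.log 2 q * m := by rw [hlog]; ring
        _ ≤ (2 * E ^ d) ^ Nat.clog 2 q * Δ ^ Nat.log 2 q * m := by
            rw [hclog]
            gcongr
            · exact Nat.succ_le_of_lt (by positivity)
            · omega
    · calc 2 * E ^ d * ((2 * E ^ d) ^ Nat.clog 2 ((q + 1) / 2) * Δ ^ Nat.log 2 ((q + 1) / 2) * m)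
          = (2 * E ^ d) ^ Nat.clog 2 q * Δ ^ Nat.log 2 ((q + 1) / 2) * m := by rw [hclog]; ring
        _ ≤ (2 * E ^ d) ^ Nat.clog 2 q * Δ ^ Nat.log 2 q * m := by
            gcongr
            omega

end SparseFamilies

section ColorClassEmbedding

variable {V : Type*} {G : SimpleGraph V} [DecidableRel G.Adj] {d : ℕ}

theorem exists_subset_forall_card_adj_le {ι : Type*} [Fintype ι] {A : ι → Finset V} {n : ℕ}
    (hn : 0 < n) (hA : ∀ i, #(A i) = 4 * n)
    (hAA : Pairwise fun i j =>
      d * Fintype.card ι * #(G.interedges (A i) (A j)) ≤ 2 * n ^ 2) (i : ι) :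
    ∃ B ⊆ A i, 2 * n ≤ #B ∧ ∀ x ∈ B, ∀ j ≠ i, d * #{y ∈ A j | G.Adj x y} ≤ n := by
  classical
  let bad (j : ι) : Finset V := {x ∈ A i | n < d * #{y ∈ A j | G.Adj x y}}
  have hbad : #((univ.erase i).biUnion bad) ≤ 2 * n := by
    refine card_biUnion_le_of_forall_mul_card_le (card_le_univ _) fun j hj => ?_
    refine Nat.le_of_mul_le_mul_right ?_ hn
    calc Fintype.card ι * #(bad j) * n = Fintype.card ι * (#(bad j) * n) := mul_assoc ..
      _ ≤ Fintype.card ι * (d * #(G.interedges (A i) (A j))) :=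
          Nat.mul_le_mul_left _ (card_filter_lt_mul_le_mul_card_interedges ..)
      _ = d * Fintype.card ι * #(G.interedges (A i) (A j)) := by ring
      _ ≤ 2 * n * n := by linarith [hAA (ne_of_mem_erase hj).symm]
  refine ⟨A i \ (univ.erase i).biUnion bad, sdiff_subset, ?_, fun x hx j hj => ?_⟩
  · exact (le_card_sdiff _ _).trans' (by rw [hA]; omega)
  · obtain ⟨hxA, hxbad⟩ := mem_sdiff.1 hx
    by_contra! hlt
    exact hxbad (mem_biUnion.2 ⟨j, by simpa using hj, mem_filter.2 ⟨hxA, hlt⟩⟩)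

variable {W : Type*} [LinearOrder W] [Fintype W] {H : SimpleGraph W}

theorem isContained_compl_of_coloring {ι : Type*} (hd : BackwardDegreeLE H d) (c : H.Coloring ι)
    {B : ι → Finset V} (hB : ∀ i, 2 * Fintype.card W ≤ #(B i))
    (hBB : ∀ i, ∀ x ∈ B i, ∀ j ≠ i, d * #{y ∈ B j | G.Adj x y} ≤ Fintype.card W) :
    H ⊑ Gᶜ := by
  classical
  have hne (w : W) : (B (c w)).Nonempty := by
    have := Fintype.card_pos_iff.2 ⟨w⟩
    exact card_pos.1 ((hB (c w)).trans_lt' (by omega))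
  refine isContained_of_greedy (I := fun s φ => ∀ b ∈ s, φ b ∈ B (c b))
    ⟨fun w => (hne w).choose, by simp⟩ fun a s φ hs hφ => ?_
  let redNeighbors (b : W) : Finset V := {y ∈ B (c a) | G.Adj (φ b) y}
  have hred : #({b ∈ s | H.Adj a b}.biUnion redNeighbors) ≤ Fintype.card W := by
    refine card_biUnion_le_of_forall_mul_card_le (hd.card_adj_le hs) fun b hb => ?_
    obtain ⟨hbs, hab⟩ := mem_filter.1 hb
    exact hBB (c b) (φ b) (hφ b hbs) (c a) (c.valid hab)
  refine ⟨B (c a) \ {b ∈ s | H.Adj a b}.biUnion redNeighbors, ?_, fun x hx => ⟨?_, ?_⟩⟩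
  · exact (le_card_sdiff _ _).trans' (by have := hB (c a); omega)
  · intro b hb hab hne
    refine (G.compl_adj _ _).2 ⟨hne, fun hadj => (mem_sdiff.1 hx).2 ?_⟩
    exact mem_biUnion.2 ⟨b, mem_filter.2 ⟨hb, hab⟩,
      mem_filter.2 ⟨(mem_sdiff.1 hx).1, hadj.symm⟩⟩
  · refine (forall_mem_insert _ _ _).2 ⟨?_, fun b hb => ?_⟩
    · simpa using (mem_sdiff.1 hx).1
    · simpa [update_of_ne (hs b hb).ne] using hφ b hb

end ColorClassEmbedding

section Ramsey

variable {W : Type*} {H : SimpleGraph W}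

theorem isContained_or_isContained_compl [LinearOrder W] [Fintype W] {V : Type*} [Fintype V]
    {d Δ q : ℕ} (G : SimpleGraph V) (hd : BackwardDegreeLE H d) (hΔ : ForwardTracesLE H Δ)
    (hH : H.Colorable q) (hd0 : 0 < d) (hΔ0 : 0 < Δ) (hq : 0 < q)
    (hV : (2 * (8 * d * q ^ 2) ^ d) ^ Nat.clog 2 q * Δ ^ Nat.log 2 q * (4 * Fintype.card W) ≤
      Fintype.card V) :
    H ⊑ G ∨ H ⊑ Gᶜ := by
  classical
  cases isEmpty_or_nonempty W
  · exact .inl .of_isEmpty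
  refine or_iff_not_imp_left.2 fun hG => ?_
  obtain ⟨A, hA, hAA⟩ := hasSparseFamilies_of_not_isContained (E := 8 * d * q ^ 2) hd hΔ hΔ0
    (by positivity) (by omega) hG hq le_rfl univ hV
  have hsparse : Pairwise fun i j => d * Fintype.card (Fin q) * #(G.interedges (A i) (A j)) ≤
      2 * Fintype.card W ^ 2 := by
    intro i j hij
    refine Nat.le_of_mul_le_mul_left ?_ (show 0 < 8 * q by positivity)
    rw [Fintype.card_fin]
    linarith [hAA hij]
  choose B hBA hB hBB using
    exists_subset_forall_card_adj_le Fintype.card_pos (fun i => (hA i).2) hsparse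
  refine isContained_compl_of_coloring hd hH.some hB fun i x hx j hj => ?_
  refine le_trans ?_ (hBB i x hx j hj)
  gcongr
  exact hBA j

theorem ramseyNumber_le_of_forall {N : ℕ}
    (h : ∀ G : SimpleGraph (Fin N), H ⊑ G ∨ H ⊑ Gᶜ) : ramseyNumber H ≤ N :=
  Nat.sInf_le fun G => (h G).imp (fun ⟨f⟩ => ⟨f.toEmbedding, fun _ _ => f.toHom.map_adj⟩)
    fun ⟨f⟩ => ⟨f.toEmbedding, fun _ _ => f.toHom.map_adj⟩

variable [Fintype W]

theorem ramseyNumber_bot_le : ramseyNumber (⊥ : SimpleGraph W) ≤ Fintype.card W :=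
  ramseyNumber_le_of_forall fun _ =>
    .inl (SimpleGraph.bot_isContained_iff_card_le.2 (Fintype.card_fin _).ge)

theorem DDeltaDegenerate.ramseyNumber_le {d Δ q : ℕ} (h : DDeltaDegenerate H d Δ)
    (hH : H.Colorable q) (hd : 0 < d) (hΔ : 0 < Δ) (hq : 0 < q) :
    ramseyNumber H ≤
      (2 * (8 * d * q ^ 2) ^ d) ^ Nat.clog 2 q * Δ ^ Nat.log 2 q * (4 * Fintype.card W) := by
  obtain ⟨_, hback, hforw⟩ := h.exists_linearOrder
  exact ramseyNumber_le_of_forall fun G => isContained_or_isContained_compl G hback hforw hH hd hΔ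
    hq (Fintype.card_fin _).ge

end Ramsey

section Numerics

open Real

theorem mul_logb_le_of_le_add_one {d q : ℕ} (hd : 0 < d) (hq : 0 < q) (hqd : q ≤ d + 1) :
    d * logb 2 q ≤ d * logb 2 d + 3 / 2 := by
  have hq_le : (q : ℝ) ≤ d * (1 + (d : ℝ)⁻¹) := by
    rw [mul_add, mul_inv_cancel₀ (by positivity), mul_one]
    exact_mod_cast hqd
  have hlog : log q ≤ log d + (d : ℝ)⁻¹ := by
    calc log q ≤ log (d * (1 + (d : ℝ)⁻¹)) := log_le_log (by positivity) hq_le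
      _ = log d + log (1 + (d : ℝ)⁻¹) := log_mul (by positivity) (by positivity)
      _ ≤ log d + (d : ℝ)⁻¹ := by
          gcongr
          linarith [log_le_sub_one_of_pos (show 0 < 1 + (d : ℝ)⁻¹ by positivity)]
  have hmul : d * log q ≤ d * log d + 1 := by
    calc d * log q ≤ d * (log d + (d : ℝ)⁻¹) := by gcongr
      _ = d * log d + 1 := by rw [mul_add, mul_inv_cancel₀ (by positivity)]
  have hlog2 : 0 < log 2 := log_pos one_lt_two
  calc d * logb 2 q = d * log q / log 2 := by rw [logb, mul_div_assoc]
    _ ≤ (d * log d + 3 / 2 * log 2) / log 2 := by gcongr; linarith [log_two_gt_d9]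
    _ = d * logb 2 d + 3 / 2 := by rw [logb]; field_simp

theorem clog_le_logb_add_one {q : ℕ} (hq : 0 < q) : (Nat.clog 2 q : ℝ) ≤ logb 2 q + 1 := by
  have hceil : ⌈logb 2 q⌉₊ = Nat.clog 2 q := mod_cast natCeil_logb_natCast 2 q
  rw [← hceil]
  exact (Nat.ceil_lt_add_one (logb_nonneg one_lt_two (mod_cast hq))).le

theorem three_mul_clog_le_four_mul_logb {q : ℕ} (hq : 2 ≤ q) (hq8 : q ≤ 8) :
    3 * (Nat.clog 2 q : ℝ) ≤ 4 * logb 2 q := by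
  have hpow : 2 ^ (3 * Nat.clog 2 q) ≤ q ^ 4 := by interval_cases q <;> decide
  have := (le_logb_iff_rpow_le (x := (3 * Nat.clog 2 q : ℕ)) one_lt_two (by positivity)).2
    (show (2 : ℝ) ^ ((3 * Nat.clog 2 q : ℕ) : ℝ) ≤ (q : ℝ) ^ 4 by exact_mod_cast hpow)
  rw [logb_pow] at this
  exact_mod_cast this

/- With `l = log₂ q`, `L = log₂ d` and `h = ⌈log₂ q⌉`, this is the logarithm of the bound
`four_mul_pow_clog_le_rpow`. For `q` close to `2` the estimate `h ≤ l + 1` is too weak. -/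
theorem two_add_mul_le_mul {d l L h : ℝ} (hd : 0 ≤ d) (hL : 0 ≤ L) (hl : 1 ≤ l)
    (hdl : d * l ≤ d * L + 3 / 2)
    (hh : h ≤ l + 1 ∧ 3 ≤ l ∨ 3 * h ≤ 4 * l ∧ l ≤ 3) :
    2 + h * (1 + d * (3 + L + 2 * l)) ≤ l * (7 * d + 8 + (3 * d + 2) * L) := by
  have hLl : 0 ≤ L * l := by positivity
  obtain ⟨hhl, hl3⟩ | ⟨hhl, hl3⟩ := hh
  · have hdiff : 0 ≤ (2 * l - 1) * (d * L - d * l + 3 / 2) :=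
      mul_nonneg (by linarith) (by linarith)
    have hdl3 : 0 ≤ d * (l - 3) := mul_nonneg hd (by linarith)
    calc 2 + h * (1 + d * (3 + L + 2 * l)) ≤ 2 + (l + 1) * (1 + d * (3 + L + 2 * l)) := by gcongr
      _ ≤ l * (7 * d + 8 + (3 * d + 2) * L) := by linarith
  · have hdl3 : d * l ≤ d * 3 := by gcongr
    calc 2 + h * (1 + d * (3 + L + 2 * l))
        ≤ 2 * l + 4 / 3 * l * (1 + d * (3 + L + 2 * l)) := by
          gcongr <;> linarith
      _ = l * (10 / 3 + 4 * d + 4 / 3 * (d * L) + 8 / 3 * (d * l)) := by ring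
      _ ≤ l * (7 * d + 8 + (3 * d + 2) * L) :=
          mul_le_mul_of_nonneg_left (by linarith) (by linarith)

theorem four_mul_pow_clog_le_rpow {d q : ℕ} (hd : 0 < d) (hq : 2 ≤ q) (hqd : q ≤ d + 1) :
    4 * (2 * (8 * d * (q : ℝ) ^ 2) ^ d) ^ Nat.clog 2 q ≤
      ((2 : ℝ) ^ (7 * d + 8) * (d : ℝ) ^ (3 * d + 2)) ^ logb 2 q := by
  have hq0 : (0 : ℝ) < q := by positivity
  have logb_two : logb 2 2 = 1 := logb_self_eq_one one_lt_two
  have logb_four : logb 2 4 = 2 := by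
    rw [show (4 : ℝ) = 2 ^ 2 by norm_num, logb_pow, logb_two, Nat.cast_ofNat, mul_one]
  have logb_eight : logb 2 8 = 3 := by
    rw [show (8 : ℝ) = 2 ^ 3 by norm_num, logb_pow, logb_two, Nat.cast_ofNat, mul_one]
  have hclog : (Nat.clog 2 q : ℝ) ≤ logb 2 q + 1 ∧ 3 ≤ logb 2 q ∨
      3 * (Nat.clog 2 q : ℝ) ≤ 4 * logb 2 q ∧ logb 2 q ≤ 3 := by
    obtain hq8 | hq8 := le_total 8 q
    · exact .inl ⟨clog_le_logb_add_one (by omega),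
        logb_eight ▸ logb_le_logb_of_le one_lt_two (by norm_num) (mod_cast hq8)⟩
    · exact .inr ⟨three_mul_clog_le_four_mul_logb hq hq8,
        logb_eight ▸ logb_le_logb_of_le one_lt_two hq0 (mod_cast hq8)⟩
  have key := two_add_mul_le_mul d.cast_nonneg (logb_nonneg one_lt_two (mod_cast hd))
    (logb_two ▸ logb_le_logb_of_le one_lt_two two_pos (mod_cast hq))
    (mul_logb_le_of_le_add_one hd (by omega) hqd) hclog
  rw [← logb_le_logb one_lt_two (by positivity) (by positivity),
    logb_rpow_eq_mul_logb_of_pos (by positivity), logb_mul (by positivity) (by positivity),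
    logb_pow, logb_mul (by positivity) (by positivity), logb_pow,
    logb_mul (by positivity) (by positivity), logb_mul (by positivity) (by positivity), logb_pow,
    logb_mul (by positivity) (by positivity), logb_pow, logb_pow, logb_two, logb_four, logb_eight]
  push_cast
  linarith

theorem two_pow_mul_pow_mul_le_pow {d Δ : ℕ} (h : 2 ≤ d ^ d * Δ) :
    2 ^ (7 * d + 8) * d ^ (3 * d + 2) * Δ ≤ (d ^ d * Δ) ^ 27 := by
  obtain rfl | hd := d.eq_zero_or_pos
  · simp
  have htwo_pow : 2 ^ d ≤ 2 * d ^ d := by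
    obtain rfl | hd2 : d = 1 ∨ 2 ≤ d := by omega
    · simp
    · exact (Nat.pow_le_pow_left hd2 d).trans (Nat.le_mul_of_pos_left _ two_pos)
  have hd_le : d ≤ d ^ d := Nat.le_self_pow hd.ne' d
  calc 2 ^ (7 * d + 8) * d ^ (3 * d + 2) * Δ = (2 ^ d) ^ 7 * 2 ^ 8 * ((d ^ d) ^ 3 * d ^ 2) * Δ := by
        ring
    _ ≤ (2 * d ^ d) ^ 7 * 2 ^ 8 * ((d ^ d) ^ 3 * (d ^ d) ^ 2) * Δ := by gcongr
    _ = 2 ^ 15 * ((d ^ d) ^ 12 * Δ) := by ring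
    _ ≤ (d ^ d * Δ) ^ 15 * ((d ^ d) ^ 12 * Δ ^ 12) := by
        gcongr
        exact Nat.le_self_pow (by norm_num) Δ
    _ = (d ^ d * Δ) ^ 27 := by ring

end Numerics

section Degenerate

variable {W : Type*} [Fintype W] {H : SimpleGraph W} {d Δ q : ℕ}

theorem DDeltaDegenerate.colorable (h : DDeltaDegenerate H d Δ) : H.Colorable (d + 1) := by
  obtain ⟨_, hback, -⟩ := h.exists_linearOrder
  exact hback.colorable

theorem DDeltaDegenerate.pos_of_ne_bot (h : DDeltaDegenerate H d Δ) (hne : H ≠ ⊥) : 0 < Δ := by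
  obtain ⟨_, -, hforw⟩ := h.exists_linearOrder
  exact hforw.pos hne

theorem DDeltaDegenerate.ramseyNumber_le_rpow (h : DDeltaDegenerate H d Δ)
    (hχ : H.chromaticNumber = q) :
    (ramseyNumber H : ℝ) ≤
      ((2 : ℝ) ^ (7 * d + 8) * (d : ℝ) ^ (3 * d + 2) * Δ) ^ Real.logb 2 q * Fintype.card W := by
  have hH : H.Colorable q := SimpleGraph.chromaticNumber_le_iff_colorable.1 hχ.le
  obtain hq | hq := Nat.lt_or_ge q 2
  · obtain rfl : H = ⊥ := SimpleGraph.colorable_one_iff.1 (hH.mono (by omega))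
    have hlogb : Real.logb 2 q = 0 := by interval_cases q <;> simp
    rw [hlogb, Real.rpow_zero, one_mul]
    exact_mod_cast ramseyNumber_bot_le
  · have hqd : q ≤ d + 1 := by exact_mod_cast hχ ▸ h.colorable.chromaticNumber_le
    have hΔ : 0 < Δ := h.pos_of_ne_bot
      (SimpleGraph.two_le_chromaticNumber_iff_ne_bot.1 (hχ ▸ mod_cast hq))
    have hnat := h.ramseyNumber_le hH (by omega) hΔ (by omega)
    have hΔpow : (Δ : ℝ) ^ Nat.log 2 q ≤ (Δ : ℝ) ^ Real.logb 2 q := by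
      rw [← Real.rpow_natCast]
      exact Real.rpow_le_rpow_of_exponent_le (mod_cast hΔ) (Real.natLog_le_logb q 2)
    calc (ramseyNumber H : ℝ)
        ≤ (2 * (8 * d * (q : ℝ) ^ 2) ^ d) ^ Nat.clog 2 q * Δ ^ Nat.log 2 q *
            (4 * Fintype.card W) := by exact_mod_cast hnat
      _ = 4 * (2 * (8 * d * (q : ℝ) ^ 2) ^ d) ^ Nat.clog 2 q * Δ ^ Nat.log 2 q *
            Fintype.card W := by ring
      _ ≤ ((2 : ℝ) ^ (7 * d + 8) * (d : ℝ) ^ (3 * d + 2)) ^ Real.logb 2 q * Δ ^ Real.logb 2 q *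
            Fintype.card W := by
          gcongr
          exact four_mul_pow_clog_le_rpow (by omega) hq hqd
      _ = ((2 : ℝ) ^ (7 * d + 8) * (d : ℝ) ^ (3 * d + 2) * Δ) ^ Real.logb 2 q *
            Fintype.card W := by rw [← Real.mul_rpow (by positivity) (by positivity)]

end Degenerate

end

theorem stmt_12_general.{u} :
    (∃ c : ℝ, 0 < c ∧ ∀ (W : Type u) [Fintype W] (H : SimpleGraph W) (d Δ q : ℕ),
      2 ≤ d ^ d * Δ → DDeltaDegenerate H d Δ → H.chromaticNumber = (q : ℕ∞) →
      (ramseyNumber H : ℝ) ≤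
        ((d : ℝ) ^ d * Δ) ^ (c * Real.logb 2 q) * Fintype.card W) ∧
    (∀ (W : Type u) [Fintype W] (H : SimpleGraph W) (d Δ q : ℕ),
      DDeltaDegenerate H d Δ → H.chromaticNumber = (q : ℕ∞) →
      (ramseyNumber H : ℝ) ≤
        ((2 : ℝ) ^ (7 * d + 8) * (d : ℝ) ^ (3 * d + 2) * Δ) ^ (Real.logb 2 q) *
          Fintype.card W) := by
  refine ⟨⟨27, by norm_num, fun W _ H d Δ q hbase h hχ => ?_⟩,
    fun W _ H d Δ q h hχ => h.ramseyNumber_le_rpow hχ⟩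
  refine (h.ramseyNumber_le_rpow hχ).trans ?_
  have hlogb : 0 ≤ Real.logb 2 q :=
    div_nonneg (Real.log_natCast_nonneg q) (Real.log_nonneg one_le_two)
  rw [Real.rpow_mul (by positivity), Real.rpow_ofNat]
  gcongr
  exact_mod_cast two_pow_mul_pow_mul_le_pow hbase

/-- There is a constant `c` such that every `(d,Δ)`-degenerate graph `H` (with `d, Δ ≥ 2`) with
`n` vertices and chromatic number `q` satisfies `r(H) ≤ (d^d Δ)^{c log q} n`; more precisely,
`r(H) ≤ (2^{7d+8} d^{3d+2} Δ)^{log₂ q} n`. -/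
theorem stmt_12 :
    (∃ c : ℝ, 0 < c ∧ ∀ (W : Type) (_ : Fintype W) (H : SimpleGraph W) (d Δ q n : ℕ),
      2 ≤ d → 2 ≤ Δ → DDeltaDegenerate H d Δ → H.chromaticNumber = (q : ℕ∞) →
      Fintype.card W = n →
      (ramseyNumber H : ℝ) ≤ ((d : ℝ) ^ d * Δ) ^ (c * Real.logb 2 q) * n) ∧
    (∀ (W : Type) (_ : Fintype W) (H : SimpleGraph W) (d Δ q n : ℕ),
      2 ≤ d → 2 ≤ Δ → DDeltaDegenerate H d Δ → H.chromaticNumber = (q : ℕ∞) →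
      Fintype.card W = n →
      (ramseyNumber H : ℝ) ≤
        ((2 : ℝ) ^ (7 * d + 8) * (d : ℝ) ^ (3 * d + 2) * Δ) ^ (Real.logb 2 q) * n) := by
  obtain ⟨⟨c, hc, hbound⟩, hexplicit⟩ := stmt_12_general
  refine ⟨⟨c, hc, fun W _ H d Δ q n hd hΔ h hχ hn => hn ▸ hbound W H d Δ q ?_ h hχ⟩,
    fun W _ H d Δ q n _ _ h hχ hn => hn ▸ hexplicit W H d Δ q h hχ⟩
  exact hΔ.trans (Nat.le_mul_of_pos_left Δ (Nat.pow_pos (by omega)))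
end
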